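/- Let α be a terminal-free pattern and let Δ_α be an arbitrary Janus operating mode for α. Then there exists a Janus automaton M with cn(Δ_α) + 1 counters such that L(M) = L(α). -/

import Mathlib

/-! Patterns: variables are natural numbers; a terminal-free pattern is a
nonempty list of variables, with 1-based positions. -/

/-- The variable at (1-based) position `j` of the pattern `α`. -/
def patAt (α : List ℕ) (j : ℕ) : ℕ := α.getD (j - 1) 0

/-- The set of (1-based) positions of the pattern `α` carrying the variable `x`. -/
def varpos (α : List ℕ) (x : ℕ) : Finset ℕ :=
  (Finset.Icc 1 α.length).filter (fun j => patAt α j = x)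

/-- A matching order for the variable `x` in the pattern `α`: a sequence of
`|α|_x − 1` pairs of positions of `x`, each with smaller first component,
whose edge set makes the set of positions of `x` a connected graph. -/
def IsMatchingOrder (α : List ℕ) (x : ℕ) (M : List (ℕ × ℕ)) : Prop :=
  M.length + 1 = α.count x ∧
  (∀ p ∈ M, p.1 ∈ varpos α x ∧ p.2 ∈ varpos α x ∧ p.1 < p.2) ∧
  ∀ a ∈ varpos α x, ∀ b ∈ varpos α x,
    Relation.ReflTransGen (fun u v => (u, v) ∈ M ∨ (v, u) ∈ M) a b

/-- A complete matching order for `α`: a tuple of `Σ_{x ∈ var(α)} (|α|_x − 1)`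
matching positions containing, for every variable `x` of `α`, all the elements
of some matching order for `x` in `α`. -/
def IsCompleteMatchingOrder (α : List ℕ) (C : List (ℕ × ℕ)) : Prop :=
  ∃ M : ℕ → List (ℕ × ℕ),
    (∀ x ∈ α.toFinset, IsMatchingOrder α x (M x)) ∧
    C.length = ∑ x ∈ α.toFinset, (α.count x - 1) ∧
    ∀ x ∈ α.toFinset, ∀ p ∈ M x, p ∈ C
/-! Janus operating modes. -/

/-- The two head markers: `lam` (λ) for the left head, `rho` (ρ) for the right head. -/
inductive Marker : Type
  | lam
  | rho
deriving DecidableEq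

/-- The map `g` from Definition 4: `g(j,j') = (j+1, …, j'−1)` and
`g(j',j) = (j', j'−1, …, j)` for `j < j'`. -/
def gfun (j j' : ℕ) : List ℕ :=
  if j < j' then (List.range (j' - j - 1)).map (fun i => j + 1 + i)
  else if j' < j then (List.range (j - j' + 1)).map (fun i => j - i)
  else []

/-- The position of the most recent entry with marker `m` among the first `j+1`
entries of `L`; if there is none, the first entry of `L` with marker `m`. -/
def latestEntry (L : List (ℕ × Marker)) (j : ℕ) (m : Marker) : Option ℕ :=
  match ((L.take (j + 1)).filter (fun e => decide (e.2 = m))).getLast? with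
  | some e => some e.1
  | none => ((L.filter (fun e => decide (e.2 = m))).head?).map Prod.fst

/-- At every prefix of `L`, the most recent λ-entry is ≤ the most recent ρ-entry
(comparing with the first λ-entry resp. ρ-entry when none has occurred yet). -/
def GoodInterleaving (L : List (ℕ × Marker)) : Prop :=
  ∀ j < L.length, ∀ pl pr,
    latestEntry L j Marker.lam = some pl → latestEntry L j Marker.rho = some pr → pl ≤ pr

/-- `Δ` is a Janus operating mode for `α`, derived from some complete matching
order `C` for `α` (with `(l_0, r_0) := (0, 0)`): each `D_i` is an interleaving
`D'_i` of `g(l_{i−1}, l_i)` with λ-markers and `g(r_{i−1}, r_i)` with ρ-markers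
(preserving the relative order of each, and such that at every prefix the most
recent λ-entry is ≤ the most recent ρ-entry), followed by `(r_i, ρ), (l_i, λ)`. -/
def IsJanusOperatingMode (α : List ℕ) (Δ : List (List (ℕ × Marker))) : Prop :=
  ∃ C : List (ℕ × ℕ),
    IsCompleteMatchingOrder α C ∧
    Δ.length = C.length ∧
    ∀ i < C.length,
      ∃ D' : List (ℕ × Marker),
        D'.filter (fun e => decide (e.2 = Marker.lam)) =
          (gfun (if i = 0 then 0 else (C.getD (i - 1) (0, 0)).1) (C.getD i (0, 0)).1).map
            (fun p => (p, Marker.lam)) ∧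
        D'.filter (fun e => decide (e.2 = Marker.rho)) =
          (gfun (if i = 0 then 0 else (C.getD (i - 1) (0, 0)).2) (C.getD i (0, 0)).2).map
            (fun p => (p, Marker.rho)) ∧
        GoodInterleaving D' ∧
        Δ.getD i [] =
          D' ++ [((C.getD i (0, 0)).2, Marker.rho), ((C.getD i (0, 0)).1, Marker.lam)]

open Classical in
/-- For a string `D` of variables (0-based indexing), `sVal D i` is the number of
variables `x ≠ D_i` having an occurrence both strictly before and strictly after
position `i` in `D`. -/
noncomputable def sVal (D : List ℕ) (i : ℕ) : ℕ :=
  (D.toFinset.filter (fun x =>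
    x ≠ D.getD i 0 ∧ (∃ j, j < i ∧ D.getD j 0 = x) ∧
    ∃ j', i < j' ∧ j' < D.length ∧ D.getD j' 0 = x)).card

/-- The head movement indicator of a Janus operating mode: the concatenation of
its tuples `D_1, …, D_k`. -/
def hmi (Δ : List (List (ℕ × Marker))) : List (ℕ × Marker) := Δ.flatten

/-- The string of variables `D_α = y_{d'_1} · y_{d'_2} · … · y_{d'_{k'}}`
associated with the head movement indicator of `Δ` and the pattern `α`. -/
def hmiVars (α : List ℕ) (Δ : List (List (ℕ × Marker))) : List ℕ :=
  (hmi Δ).map (fun e => patAt α e.1)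

/-- The counter number of a Janus operating mode `Δ` for `α`:
`cn(Δ) = max{s_i | 1 ≤ i ≤ k'}`. -/
noncomputable def cnOf (α : List ℕ) (Δ : List (List (ℕ × Marker))) : ℕ :=
  (Finset.range (hmiVars α Δ).length).sup (sVal (hmiVars α Δ))

/-- The variable distance of `α`: the smallest `k ≥ 0` such that for every
variable `x`, every factorisation `α = β·x·γ·x·δ` with `|γ|_x = 0` satisfies
`|var(γ)| ≤ k`. -/
noncomputable def vd (α : List ℕ) : ℕ :=
  sInf {k : ℕ | ∀ x : ℕ, ∀ β γ δ : List ℕ,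
    α = β ++ [x] ++ γ ++ [x] ++ δ → γ.count x = 0 → γ.toFinset.card ≤ k}
/-- The pattern language of a terminal-free pattern `α` over the terminal
alphabet `A`: all images of `α` under substitutions (morphisms `X* → A*`). -/
def PatternLang (A : Type) (α : List ℕ) : Set (List A) :=
  {w | ∃ σ : ℕ → List A, w = (α.map σ).flatten}

/-- A tape symbol of a Janus automaton: the left endmarker `¢`, the right
endmarker `$`, or an input symbol. -/
inductive JSym (A : Type) : Type
  | lend
  | rend
  | ch (a : A)

/-- A head instruction of a Janus automaton: `−1`, `0` or `1`. -/
inductive HInstr : Type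
  | left
  | stay
  | right

def HInstr.toInt : HInstr → ℤ
  | .left => -1
  | .stay => 0
  | .right => 1

/-- A counter instruction of a Janus automaton: `0` (keep), `1` (increment)
or `r` (reset). -/
inductive CInstr : Type
  | keep
  | inc
  | reset

/-- A Janus automaton with `k` counters over the input alphabet `A`:
a finite state set `Q`, an initial state `q0`, a set `F` of accepting states,
and a transition function
`δ : Q × Σ² × {t_=, t_<}^k → Q × {−1,0,1}² × {0,1,r}^k`
(the counter message `true` stands for `t_=`, i.e. counter value = bound). -/
structure JFA (k : ℕ) (A : Type) : Type 1 where
  Q : Type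
  fin : Fintype Q
  q0 : Q
  F : Set Q
  δ : Q → JSym A → JSym A → (Fin k → Bool) → Q × (HInstr × HInstr) × (Fin k → CInstr)

/-- A configuration of a Janus automaton with `k` counters and state set `Q`:
a state, the two head positions, and the counter values and counter bounds. -/
structure JConfig (k : ℕ) (Q : Type) where
  q : Q
  h1 : ℕ
  h2 : ℕ
  cval : Fin k → ℕ
  cbnd : Fin k → ℕ

/-- The symbol at position `h` of the tape `¢w$` (position `0` is `¢`,
positions `1, …, |w|` carry `w`, position `|w|+1` is `$`). -/
def tapeSym {A : Type} (w : List A) (h : ℕ) : JSym A :=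
  if h = 0 then JSym.lend
  else
    match w[h - 1]? with
    | some a => JSym.ch a
    | none => JSym.rend

/-- A valid configuration on input `¢w$`: `0 ≤ h_1 ≤ h_2 ≤ |w|+1` and
`0 ≤ c_i ≤ C_i ≤ |w|` for every counter `i`. -/
def JValid {k : ℕ} {Q : Type} {A : Type} (w : List A) (c : JConfig k Q) : Prop :=
  c.h1 ≤ c.h2 ∧ c.h2 ≤ w.length + 1 ∧ ∀ i, c.cval i ≤ c.cbnd i ∧ c.cbnd i ≤ w.length

/-- An atomic move of the Janus automaton `M` on input `¢w$`: the transition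
function is applied to the current state, the scanned symbols and the counter
messages; the heads move by the head instructions if
`0 ≤ h_1 + r_1 ≤ h_2 + r_2 ≤ |w|+1` and stay otherwise; a reset counter gets
value `0` and a nondeterministically guessed bound `≤ |w|`, and otherwise the
bound is unchanged and the value is incremented strictly modulo the bound. -/
def JStep {k : ℕ} {A : Type} (M : JFA k A) (w : List A) (c c' : JConfig k M.Q) : Prop :=
  let res := M.δ c.q (tapeSym w c.h1) (tapeSym w c.h2) (fun i => decide (c.cval i = c.cbnd i))
  let t1 : ℤ := (c.h1 : ℤ) + res.2.1.1.toInt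
  let t2 : ℤ := (c.h2 : ℤ) + res.2.1.2.toInt
  JValid w c ∧ JValid w c' ∧
  c'.q = res.1 ∧
  (if 0 ≤ t1 ∧ t1 ≤ t2 ∧ t2 ≤ (w.length : ℤ) + 1
    then (c'.h1 : ℤ) = t1 ∧ (c'.h2 : ℤ) = t2
    else c'.h1 = c.h1 ∧ c'.h2 = c.h2) ∧
  ∀ i : Fin k,
    match res.2.2 i with
    | CInstr.reset => c'.cval i = 0 ∧ c'.cbnd i ≤ w.length
    | CInstr.keep => c'.cbnd i = c.cbnd i ∧ c'.cval i = c.cval i % (c.cbnd i + 1)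
    | CInstr.inc => c'.cbnd i = c.cbnd i ∧ c'.cval i = (c.cval i + 1) % (c.cbnd i + 1)

/-- `M` accepts `w` iff a configuration with an accepting state is reachable
from the initial configuration by a sequence of atomic moves. -/
def JFA.Accepts {k : ℕ} {A : Type} (M : JFA k A) (w : List A) : Prop :=
  ∃ c : JConfig k M.Q,
    Relation.ReflTransGen (JStep M w) ⟨M.q0, 0, 0, fun _ => 0, fun _ => 0⟩ c ∧ c.q ∈ M.F

/-- The language accepted by the Janus automaton `M`. -/
def JFA.Lang {k : ℕ} {A : Type} (M : JFA k A) : Set (List A) := {w | M.Accepts w}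

/-! In a factorisation of the input according to `α` every occurrence of a variable is mapped to
the factor between two neighbouring gaps, and the automaton keeps its heads at such gaps. The
counter bound used for `x` is the length of the image of `x`, guessed when `x` occurs for the first
time in the head movement indicator. At that moment at most `cn(Δ)` other variables have been read
and are still to be read again, so a greedy assignment of the variables to `cn(Δ) + 1` counters
never overwrites a bound that is still needed.

Crossing a variable `x` means moving a head as often as the counter of `x` tells. The heads have to
stay in order on the tape, but as they are interchangeable nothing is lost when the gaps they stand
for cross. At the end of the round for the matching position `(l, r)` the factors at `l` and `r`
are compared. Since matching orders are connected, these comparisons force all occurrences of a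
variable to have the same image. That the factors exhaust the input is tested when the last
position of `α` is compared as the right one of a pair; if this never happens, the last variable of
`α` occurs only once and its image can be any rest of the input.

The operations are thus determined by `Δ`, up to the guessed bounds, and the automaton is a
straight-line program whose states are the remaining instructions. -/

namespace Janus

open Relation

section MatchingOrders

variable {α : List ℕ} {C : List (ℕ × ℕ)}

theorem mem_varpos {x j : ℕ} :
    j ∈ varpos α x ↔ (1 ≤ j ∧ j ≤ α.length) ∧ patAt α j = x := by
  rw [varpos, Finset.mem_filter, Finset.mem_Icc]

theorem patAt_succ {j : ℕ} (h : j < α.length) : patAt α (j + 1) = α[j] :=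
  List.getD_eq_getElem _ _ h

theorem map_patAt_range' (α : List ℕ) : (List.range' 1 α.length).map (patAt α) = α := by
  refine List.ext_getElem (by simp) fun i _ hi => ?_
  rw [List.getElem_map, List.getElem_range', one_mul, add_comm, patAt_succ hi]

theorem card_varpos (α : List ℕ) (x : ℕ) : (varpos α x).card = α.count x := by
  have hpos : varpos α x = ((List.range' 1 α.length).filter (patAt α · = x)).toFinset := by
    rw [List.toFinset_filter, List.toFinset_range'_1_1]
    simp [varpos]
  rw [hpos, List.toFinset_card_of_nodup (List.Nodup.filter _ List.nodup_range'),
    ← List.countP_eq_length_filter]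
  conv_rhs => rw [← map_patAt_range' α, List.count, List.countP_map]
  rfl

theorem card_le_card_edges_add_one {β : Type*} {V : Finset β} {E : Finset (β × β)}
    (hV : V.Nonempty) (hE : ∀ e ∈ E, e.1 ∈ V ∧ e.2 ∈ V)
    (hconn : ∀ a ∈ V, ∀ b ∈ V, ReflTransGen (fun u v => (u, v) ∈ E ∨ (v, u) ∈ E) a b) :
    V.card ≤ E.card + 1 := by
  classical
  let G : SimpleGraph V := SimpleGraph.fromRel fun u v => (u.1, v.1) ∈ E
  have reachable {a b : β} (ha : a ∈ V)
      (hab : ReflTransGen (fun u v => (u, v) ∈ E ∨ (v, u) ∈ E) a b) :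
      ∃ hb : b ∈ V, G.Reachable ⟨a, ha⟩ ⟨b, hb⟩ := by
    induction hab with
    | refl => exact ⟨ha, .rfl⟩
    | @tail u v _ huv ih =>
      obtain ⟨hu, hau⟩ := ih
      have hv : v ∈ V := huv.elim (fun h => (hE _ h).2) fun h => (hE _ h).1
      rcases eq_or_ne u v with rfl | hne
      · exact ⟨hu, hau⟩
      · exact ⟨hv, hau.trans (SimpleGraph.Adj.reachable ⟨by simpa using hne, huv⟩)⟩
  have hG : G.Connected :=
    { preconnected := fun a b => (reachable a.2 (hconn a a.2 b b.2)).2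
      nonempty := hV.to_subtype }
  have hedges (e : G.edgeSet) : e.1.map Subtype.val ∈ E.image fun p => s(p.1, p.2) := by
    obtain ⟨⟨a, b⟩, hab⟩ := e
    rcases hab.2 with h | h
    · exact Finset.mem_image.2 ⟨_, h, rfl⟩
    · exact Finset.mem_image.2 ⟨_, h, Sym2.eq_swap⟩
  have hcard : Nat.card G.edgeSet ≤ E.card := by
    refine le_trans ?_ (Finset.card_image_le (f := fun p : β × β => s(p.1, p.2)))
    rw [← Nat.card_eq_finsetCard]
    exact Nat.card_le_card_of_injective (fun e => ⟨_, hedges e⟩) fun e e' h =>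
      Subtype.ext (Sym2.map.injective Subtype.val_injective (congrArg Subtype.val h))
  have := hG.card_vert_le_card_edgeSet_add_one
  rw [Nat.card_eq_fintype_card, Fintype.card_coe] at this
  omega

theorem count_le_card_toFinset_add_one {x : ℕ} {M : List (ℕ × ℕ)} (h : IsMatchingOrder α x M) :
    α.count x ≤ M.toFinset.card + 1 := by
  obtain ⟨hlen, hmem, hconn⟩ := h
  rw [← card_varpos]
  refine card_le_card_edges_add_one ?_ (fun e he => ?_) ?_
  · rw [← Finset.card_pos, card_varpos]
    omega
  · obtain ⟨h₁, h₂, -⟩ := hmem e (List.mem_toFinset.1 he)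
    exact ⟨h₁, h₂⟩
  · simpa only [List.mem_toFinset] using hconn

/-- The positions `u` and `v` are matched, in either order, by the matching positions `C`. -/
def Linked (C : List (ℕ × ℕ)) (u v : ℕ) : Prop := (u, v) ∈ C ∨ (v, u) ∈ C

theorem reflTransGen_linked (hC : IsCompleteMatchingOrder α C) {a b x : ℕ}
    (ha : a ∈ varpos α x) (hb : b ∈ varpos α x) : ReflTransGen (Linked C) a b := by
  obtain ⟨M, hM, -, hMC⟩ := hC
  have hx : x ∈ α.toFinset := by
    rw [List.mem_toFinset, ← List.count_pos_iff, ← card_varpos]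
    exact Finset.card_pos.2 ⟨a, ha⟩
  exact ReflTransGen.mono (fun u v => Or.imp (hMC x hx _) (hMC x hx _)) _ _
    ((hM x hx).2.2 a ha b hb)

/-- By counting: the matching orders contained in `C` are disjoint and already exhaust its
length. -/
theorem exists_varpos_of_mem (hC : IsCompleteMatchingOrder α C) {p : ℕ × ℕ} (hp : p ∈ C) :
    ∃ x, p.1 ∈ varpos α x ∧ p.2 ∈ varpos α x ∧ p.1 < p.2 := by
  obtain ⟨M, hM, hlen, hMC⟩ := hC
  have hdisj : (α.toFinset : Set ℕ).PairwiseDisjoint fun x => (M x).toFinset := by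
    refine fun x hx y hy hxy => Finset.disjoint_left.2 fun p hpx hpy => hxy ?_
    have hpx := ((hM x hx).2.1 p (List.mem_toFinset.1 hpx)).1
    have hpy := ((hM y hy).2.1 p (List.mem_toFinset.1 hpy)).1
    exact (mem_varpos.1 hpx).2.symm.trans (mem_varpos.1 hpy).2
  have hsub : α.toFinset.biUnion (fun x => (M x).toFinset) ⊆ C.toFinset := by
    refine Finset.biUnion_subset.2 fun x hx p hp => ?_
    exact List.mem_toFinset.2 (hMC x hx p (List.mem_toFinset.1 hp))
  have hcard : C.toFinset.card ≤ (α.toFinset.biUnion fun x => (M x).toFinset).card := by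
    rw [Finset.card_biUnion hdisj]
    refine C.toFinset_card_le.trans (hlen.trans_le (Finset.sum_le_sum fun x hx => ?_))
    exact Nat.sub_le_of_le_add (count_le_card_toFinset_add_one (hM x hx))
  rw [← List.mem_toFinset, ← Finset.eq_of_subset_of_card_le hsub hcard, Finset.mem_biUnion] at hp
  obtain ⟨x, hx, hpx⟩ := hp
  exact ⟨x, (hM x hx).2.1 p (List.mem_toFinset.1 hpx)⟩

end MatchingOrders

section Programs

variable {k : ℕ} {A : Type} {w : List A}

/-- The head positions after an atomic move on an input of length `n`: the instructions are ignored
when they would make the heads cross or leave the tape. -/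
def moveHeads (n : ℕ) (d₁ d₂ : HInstr) (h : ℕ × ℕ) : ℕ × ℕ :=
  if 0 ≤ h.1 + d₁.toInt ∧ h.1 + d₁.toInt ≤ h.2 + d₂.toInt ∧ h.2 + d₂.toInt ≤ (n : ℤ) + 1
  then ((h.1 + d₁.toInt).toNat, (h.2 + d₂.toInt).toNat) else h

/-- The head positions are in order and on the tape `¢w$`. -/
def ValidHeads (w : List A) (h : ℕ × ℕ) : Prop := h.1 ≤ h.2 ∧ h.2 ≤ w.length + 1

theorem moveHeads_stay (n : ℕ) (h : ℕ × ℕ) : moveHeads n .stay .stay h = h := by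
  simp [moveHeads, HInstr.toInt]

theorem ValidHeads.moveHeads {h : ℕ × ℕ} (hh : ValidHeads w h) (d₁ d₂ : HInstr) :
    ValidHeads w (moveHeads w.length d₁ d₂ h) := by
  unfold Janus.moveHeads
  split_ifs
  · constructor <;> dsimp only <;> omega
  · exact hh

/-- A head move that is only possible when the scanned symbols satisfy `guard`. -/
structure Move (A : Type) where
  guard : JSym A → JSym A → Prop
  left : HInstr
  right : HInstr

open Classical in
/-- The effect of a guarded move on the head positions, `none` if the guard fails. -/
noncomputable def Move.apply (w : List A) (m : Move A) (h : ℕ × ℕ) : Option (ℕ × ℕ) :=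
  if m.guard (tapeSym w h.1) (tapeSym w h.2) then some (moveHeads w.length m.left m.right h)
  else none

/-- The effect of a sequence of guarded moves on the head positions. -/
noncomputable def run (w : List A) (ms : List (Move A)) (h : ℕ × ℕ) : Option (ℕ × ℕ) :=
  ms.foldlM (fun h m => m.apply w h) h

theorem run_append (ms ms' : List (Move A)) (h : ℕ × ℕ) :
    run w (ms ++ ms') h = (run w ms h).bind (run w ms') :=
  List.foldlM_append ..

theorem run_cons (m : Move A) (ms : List (Move A)) (h : ℕ × ℕ) :
    run w (m :: ms) h = (m.apply w h).bind (run w ms) :=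
  rfl

theorem run_singleton (m : Move A) (h : ℕ × ℕ) : run w [m] h = m.apply w h := by
  rw [run_cons]
  exact Option.bind_fun_some _

theorem Move.apply_eq_some_iff {m : Move A} {h h' : ℕ × ℕ} :
    m.apply w h = some h' ↔
      m.guard (tapeSym w h.1) (tapeSym w h.2) ∧ h' = moveHeads w.length m.left m.right h := by
  simp [Move.apply, eq_comm]

theorem ValidHeads.run {ms : List (Move A)} {h h' : ℕ × ℕ} (hh : ValidHeads w h)
    (hrun : run w ms h = some h') : ValidHeads w h' := by
  induction ms generalizing h with
  | nil => exact Option.some.inj hrun ▸ hh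
  | cons m ms ih =>
    rw [run_cons, Option.bind_eq_some_iff] at hrun
    obtain ⟨h₁, hm, hms⟩ := hrun
    obtain ⟨-, rfl⟩ := Move.apply_eq_some_iff.1 hm
    exact ih (hh.moveHeads _ _) hms

/-- A guarded move executed once, or as often as the bound of a counter tells. -/
inductive Op (A : Type) : Type
  | once (m : Move A)
  | loop (m : Move A)

/-- The moves made by an operation whose counter has the bound `v`. -/
def Op.moves (v : ℕ) : Op A → List (Move A)
  | .once m => [m]
  | .loop m => List.replicate v m

/-- An instruction of a straight-line program: guess a new bound for the counter `c`, or execute an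
operation with the counter `c`. -/
inductive Instr (k : ℕ) (A : Type) : Type
  | reset (c : Fin k)
  | exec (c : Fin k) (o : Op A)

/-- The program has a successful execution on `w` from the head positions `h`, where `C` holds the
current counter bounds. -/
def Succeeds (w : List A) : List (Instr k A) → ℕ × ℕ → (Fin k → ℕ) → Prop
  | [], _, _ => True
  | .reset c :: L, h, C => ∃ v ≤ w.length, Succeeds w L h (Function.update C c v)
  | .exec c o :: L, h, C => ∃ h', run w (o.moves (C c)) h = some h' ∧ Succeeds w L h' C

open Classical in
/-- The transition function of `automaton`. A state is the rest of the program to be executed; when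
a guard fails, the automaton loops in a nonaccepting state. -/
noncomputable def transition (prog : List (Instr k A)) :
    {L // L <:+ prog} → JSym A → JSym A → (Fin k → Bool) →
      {L // L <:+ prog} × (HInstr × HInstr) × (Fin k → CInstr)
  | ⟨[], hL⟩, _, _, _ => (⟨[], hL⟩, (.stay, .stay), fun _ => .keep)
  | ⟨.reset c :: L, hL⟩, _, _, _ =>
    (⟨L, (List.suffix_cons _ _).trans hL⟩, (.stay, .stay),
      Function.update (fun _ => .keep) c .reset)
  | ⟨.exec c (.once m) :: L, hL⟩, a, b, _ =>
    if m.guard a b then (⟨L, (List.suffix_cons _ _).trans hL⟩, (m.left, m.right), fun _ => .keep)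
    else (⟨.exec c (.once m) :: L, hL⟩, (.stay, .stay), fun _ => .keep)
  | ⟨.exec c (.loop m) :: L, hL⟩, a, b, s =>
    if s c then
      (⟨L, (List.suffix_cons _ _).trans hL⟩, (.stay, .stay),
        Function.update (fun _ => .keep) c .inc)
    else if m.guard a b then
      (⟨.exec c (.loop m) :: L, hL⟩, (m.left, m.right), Function.update (fun _ => .keep) c .inc)
    else (⟨.exec c (.loop m) :: L, hL⟩, (.stay, .stay), fun _ => .keep)

/-- The Janus automaton executing the straight-line program `prog`. -/
noncomputable def automaton (prog : List (Instr k A)) : JFA k A where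
  Q := {L // L <:+ prog}
  fin := by
    have : Finite {L // L <:+ prog} :=
      (prog.tails.finite_toSet.subset fun L hL => (List.mem_tails L prog).2 hL).to_subtype
    exact Fintype.ofFinite _
  q0 := ⟨prog, List.suffix_rfl⟩
  F := {q | q.1 = []}
  δ := transition prog

/-- The effect of a counter instruction on the value `v` and the bound `b` of a counter. -/
def CounterStep (n : ℕ) (I : CInstr) (v b v' b' : ℕ) : Prop :=
  match I with
  | .reset => v' = 0 ∧ b' ≤ n
  | .keep => b' = b ∧ v' = v % (b + 1)
  | .inc => b' = b ∧ v' = (v + 1) % (b + 1)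

/-- The configuration with state `q`, head positions `h`, counter values `V` and bounds `C`. -/
def config {Q : Type} (q : Q) (h : ℕ × ℕ) (V C : Fin k → ℕ) : JConfig k Q := ⟨q, h.1, h.2, V, C⟩

/-- Some accepting configuration is reachable from `c`. -/
def AcceptsFrom (M : JFA k A) (w : List A) (c : JConfig k M.Q) : Prop :=
  ∃ c', ReflTransGen (JStep M w) c c' ∧ c'.q ∈ M.F

variable {M : JFA k A} {q q' : M.Q} {h : ℕ × ℕ} {V C : Fin k → ℕ} {d₁ d₂ : HInstr}
  {I : Fin k → CInstr} {c : Fin k}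

theorem jValid_config_iff {Q : Type} {q : Q} : JValid w (config q h V C) ↔
    ValidHeads w h ∧ ∀ i, V i ≤ C i ∧ C i ≤ w.length :=
  and_assoc.symm

theorem CounterStep.valid {n v b v' b' : ℕ} {I : CInstr} (h : CounterStep n I v b v' b')
    (hb : b ≤ n) : v' ≤ b' ∧ b' ≤ n := by
  have := Nat.mod_lt v (Nat.add_one_pos b)
  have := Nat.mod_lt (v + 1) (Nat.add_one_pos b)
  cases I <;> simp only [CounterStep] at h <;> omega

theorem jStep_iff {c c' : JConfig k M.Q} (hv : JValid w c)
    (hδ : M.δ c.q (tapeSym w c.h1) (tapeSym w c.h2) (fun i => decide (c.cval i = c.cbnd i)) =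
      (q', (d₁, d₂), I)) :
    JStep M w c c' ↔
      ∃ V C, (∀ i, CounterStep w.length (I i) (c.cval i) (c.cbnd i) (V i) (C i)) ∧
        c' = config q' (moveHeads w.length d₁ d₂ (c.h1, c.h2)) V C := by
  have hheads : (if 0 ≤ (c.h1 : ℤ) + d₁.toInt ∧ (c.h1 : ℤ) + d₁.toInt ≤ c.h2 + d₂.toInt ∧
      c.h2 + d₂.toInt ≤ (w.length : ℤ) + 1
      then (c'.h1 : ℤ) = c.h1 + d₁.toInt ∧ (c'.h2 : ℤ) = c.h2 + d₂.toInt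
      else c'.h1 = c.h1 ∧ c'.h2 = c.h2) ↔
        (c'.h1, c'.h2) = moveHeads w.length d₁ d₂ (c.h1, c.h2) := by
    unfold moveHeads
    split_ifs <;> rw [Prod.ext_iff]
    dsimp only
    omega
  have hstep : JStep M w c c' ↔
      JValid w c' ∧ c'.q = q' ∧ (c'.h1, c'.h2) = moveHeads w.length d₁ d₂ (c.h1, c.h2) ∧
        ∀ i, CounterStep w.length (I i) (c.cval i) (c.cbnd i) (c'.cval i) (c'.cbnd i) := by
    rw [← hheads]
    simp only [JStep, hδ]
    exact and_iff_right hv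
  rw [hstep]
  constructor
  · rintro ⟨-, rfl, hheads', hI⟩
    exact ⟨c'.cval, c'.cbnd, hI, by rw [← hheads']; rfl⟩
  · rintro ⟨V, C, hI, rfl⟩
    obtain ⟨hh, hC⟩ : ValidHeads w (c.h1, c.h2) ∧ _ := and_assoc.2 hv
    exact ⟨jValid_config_iff.2 ⟨hh.moveHeads _ _, fun i => (hI i).valid (hC i).2⟩, rfl, rfl, hI⟩

theorem acceptsFrom_iff_exists_jStep {c : JConfig k M.Q} (hc : c.q ∉ M.F) :
    AcceptsFrom M w c ↔ ∃ c', JStep M w c c' ∧ AcceptsFrom M w c' := by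
  constructor
  · rintro ⟨d, hcd, hd⟩
    rcases hcd.cases_head with rfl | ⟨c', hcc', hc'd⟩
    · exact absurd hd hc
    · exact ⟨c', hcc', d, hc'd, hd⟩
  · rintro ⟨c', hcc', d, hc'd, hd⟩
    exact ⟨d, .head hcc' hc'd, hd⟩

theorem acceptsFrom_config_iff (hv : JValid w (config q h V C)) (hq : q ∉ M.F)
    (hδ : M.δ q (tapeSym w h.1) (tapeSym w h.2) (fun i => decide (V i = C i)) = (q', (d₁, d₂), I)) :
    AcceptsFrom M w (config q h V C) ↔
      ∃ V' C', (∀ i, CounterStep w.length (I i) (V i) (C i) (V' i) (C' i)) ∧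
        AcceptsFrom M w (config q' (moveHeads w.length d₁ d₂ h) V' C') := by
  rw [acceptsFrom_iff_exists_jStep hq]
  simp only [jStep_iff hv hδ]
  exact ⟨fun ⟨_, ⟨V', C', hI, hc⟩, hacc⟩ => ⟨V', C', hI, hc ▸ hacc⟩,
    fun ⟨V', C', hI, hacc⟩ => ⟨_, ⟨V', C', hI, rfl⟩, hacc⟩⟩

theorem forall_counterStep_keep_iff {n : ℕ} (hV : ∀ i, V i ≤ C i) {V' C' : Fin k → ℕ} :
    (∀ i, CounterStep n .keep (V i) (C i) (V' i) (C' i)) ↔ V' = V ∧ C' = C := by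
  simp only [CounterStep, Nat.mod_eq_of_lt (Nat.lt_succ_of_le (hV _)), forall_and, funext_iff]
  exact and_comm

theorem forall_counterStep_update_iff {n : ℕ} (hV : ∀ i, V i ≤ C i) (J : CInstr)
    {V' C' : Fin k → ℕ} :
    (∀ i, CounterStep n (Function.update (fun _ => CInstr.keep) c J i) (V i) (C i) (V' i) (C' i)) ↔
      ∃ v b, CounterStep n J (V c) (C c) v b ∧
        V' = Function.update V c v ∧ C' = Function.update C c b := by
  rw [Function.forall_update_iff (fun _ => CInstr.keep)
    (fun i J => CounterStep n J (V i) (C i) (V' i) (C' i))]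
  simp only [CounterStep, Nat.mod_eq_of_lt (Nat.lt_succ_of_le (hV _)), Function.eq_update_iff]
  constructor
  · rintro ⟨hJ, hkeep⟩
    exact ⟨_, _, hJ, ⟨rfl, fun i hi => (hkeep i hi).2⟩, rfl, fun i hi => (hkeep i hi).1⟩
  · rintro ⟨_, _, hJ, ⟨rfl, hV'⟩, rfl, hC'⟩
    exact ⟨hJ, fun i hi => ⟨hC' i hi, hV' i hi⟩⟩

theorem acceptsFrom_keep_iff (hv : JValid w (config q h V C)) (hq : q ∉ M.F)
    (hδ : M.δ q (tapeSym w h.1) (tapeSym w h.2) (fun i => decide (V i = C i)) =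
      (q', (d₁, d₂), fun _ => .keep)) :
    AcceptsFrom M w (config q h V C) ↔
      AcceptsFrom M w (config q' (moveHeads w.length d₁ d₂ h) V C) := by
  rw [acceptsFrom_config_iff hv hq hδ]
  have hV : ∀ i, V i ≤ C i := fun i => (hv.2.2 i).1
  simp only [forall_counterStep_keep_iff hV, and_assoc, exists_and_left, exists_eq_left]

theorem acceptsFrom_inc_iff (hv : JValid w (config q h V C)) (hq : q ∉ M.F)
    (hδ : M.δ q (tapeSym w h.1) (tapeSym w h.2) (fun i => decide (V i = C i)) =
      (q', (d₁, d₂), Function.update (fun _ => .keep) c .inc)) :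
    AcceptsFrom M w (config q h V C) ↔ AcceptsFrom M w (config q'
      (moveHeads w.length d₁ d₂ h) (Function.update V c ((V c + 1) % (C c + 1))) C) := by
  rw [acceptsFrom_config_iff hv hq hδ]
  have hV : ∀ i, V i ≤ C i := fun i => (hv.2.2 i).1
  simp only [forall_counterStep_update_iff hV]
  constructor
  · rintro ⟨_, _, ⟨_, _, ⟨rfl, rfl⟩, rfl, rfl⟩, hacc⟩
    rwa [Function.update_eq_self] at hacc
  · exact fun hacc => ⟨_, _, ⟨_, _, ⟨rfl, rfl⟩, rfl, (Function.update_eq_self c C).symm⟩, hacc⟩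

theorem acceptsFrom_reset_iff (hv : JValid w (config q h V C)) (hq : q ∉ M.F)
    (hδ : M.δ q (tapeSym w h.1) (tapeSym w h.2) (fun i => decide (V i = C i)) =
      (q', (d₁, d₂), Function.update (fun _ => .keep) c .reset)) :
    AcceptsFrom M w (config q h V C) ↔ ∃ b ≤ w.length, AcceptsFrom M w (config q'
      (moveHeads w.length d₁ d₂ h) (Function.update V c 0) (Function.update C c b)) := by
  rw [acceptsFrom_config_iff hv hq hδ]
  have hV : ∀ i, V i ≤ C i := fun i => (hv.2.2 i).1
  simp only [forall_counterStep_update_iff hV]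
  constructor
  · rintro ⟨_, _, ⟨_, b, ⟨rfl, hb⟩, rfl, rfl⟩, hacc⟩
    exact ⟨b, hb, hacc⟩
  · rintro ⟨b, hb, hacc⟩
    exact ⟨_, _, ⟨_, b, ⟨rfl, hb⟩, rfl, rfl⟩, hacc⟩

theorem not_acceptsFrom_of_selfLoop (hv : JValid w (config q h V C)) (hq : q ∉ M.F)
    (hδ : M.δ q (tapeSym w h.1) (tapeSym w h.2) (fun i => decide (V i = C i)) =
      (q, (.stay, .stay), fun _ => .keep)) :
    ¬AcceptsFrom M w (config q h V C) := by
  rintro ⟨d, hcd, hd⟩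
  have hdc : d = config q h V C := by
    clear hd
    induction hcd with
    | refl => rfl
    | tail _ hstep ih =>
      rw [ih, jStep_iff hv hδ] at hstep
      obtain ⟨V', C', hI, rfl⟩ := hstep
      obtain ⟨rfl, rfl⟩ := (forall_counterStep_keep_iff fun i => (hv.2.2 i).1).1 hI
      exact congrArg (config q · V' C') (moveHeads_stay _ _)
  rw [hdc] at hd
  exact hq hd

variable {prog L : List (Instr k A)} {m : Move A}

/-- The state of `automaton prog` in which `L` remains to be executed. -/
def state (hL : L <:+ prog) : (automaton prog).Q := ⟨L, hL⟩

theorem state_notMem_F {ins : Instr k A} (hL : ins :: L <:+ prog) :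
    state hL ∉ (automaton prog).F :=
  List.cons_ne_nil _ _

theorem isSuffix_of_cons {ins : Instr k A} (hL : ins :: L <:+ prog) : L <:+ prog :=
  (List.suffix_cons _ _).trans hL

theorem acceptsFrom_once_iff {hL : .exec c (.once m) :: L <:+ prog}
    (hv : JValid w (config (state hL) h V C)) :
    AcceptsFrom (automaton prog) w (config (state hL) h V C) ↔ ∃ h', m.apply w h = some h' ∧
      AcceptsFrom (automaton prog) w (config (state (isSuffix_of_cons hL)) h' V C) := by
  have hF := state_notMem_F hL
  by_cases hg : m.guard (tapeSym w h.1) (tapeSym w h.2)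
  · rw [acceptsFrom_keep_iff hv hF (if_pos hg)]
    simp only [Move.apply_eq_some_iff, hg, true_and, exists_eq_left]
    rfl
  · simp only [Move.apply_eq_some_iff, hg, false_and, exists_false, iff_false]
    exact not_acceptsFrom_of_selfLoop hv hF (if_neg hg)

theorem update_zero_le {i : ℕ} (hi : i ≤ C c) (c' : Fin k) :
    Function.update (0 : Fin k → ℕ) c i c' ≤ C c' :=
  (Function.forall_update_iff (0 : Fin k → ℕ) fun c' v => v ≤ C c').2
    ⟨hi, fun _ _ => Nat.zero_le _⟩ c'

theorem acceptsFrom_loop_iff {hL : .exec c (.loop m) :: L <:+ prog} {i j : ℕ} (hij : i + j = C c)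
    (hh : ValidHeads w h) (hC : ∀ c, C c ≤ w.length) :
    AcceptsFrom (automaton prog) w (config (state hL) h (Function.update 0 c i) C) ↔
      ∃ h', run w (List.replicate j m) h = some h' ∧ AcceptsFrom (automaton prog) w
        (config (state (isSuffix_of_cons hL)) h' 0 C) := by
  have hF := state_notMem_F hL
  have hv : JValid w (config (state hL) h (Function.update 0 c i) C) :=
    jValid_config_iff.2 ⟨hh, fun c' => ⟨update_zero_le (by omega) c', hC c'⟩⟩
  induction j generalizing i h with
  | zero =>
    have hbound : decide (Function.update (0 : Fin k → ℕ) c i c = C c) = true := by simpa using hij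
    rw [acceptsFrom_inc_iff hv hF (if_pos hbound), Function.update_self, moveHeads_stay, ← hij,
      add_zero, Nat.mod_self, Function.update_idem]
    simp only [List.replicate_zero, run, List.foldlM_nil, Option.pure_def, Option.some.injEq,
      exists_eq_left']
    rw [show Function.update (0 : Fin k → ℕ) c 0 = 0 from Function.update_eq_self c 0]
    rfl
  | succ j ih =>
    have hbound : ¬decide (Function.update (0 : Fin k → ℕ) c i c = C c) = true := by
      simp only [Function.update_self, decide_eq_true_eq]
      omega
    by_cases hg : m.guard (tapeSym w h.1) (tapeSym w h.2)
    · have hm : m.apply w h = some (moveHeads w.length m.left m.right h) := if_pos hg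
      rw [acceptsFrom_inc_iff hv hF ((if_neg hbound).trans (if_pos hg)), Function.update_self,
        Nat.mod_eq_of_lt (by omega), Function.update_idem, List.replicate_succ, run_cons, hm]
      exact ih (by omega) (hh.moveHeads _ _) (jValid_config_iff.2
        ⟨hh.moveHeads _ _, fun c' => ⟨update_zero_le (by omega) c', hC c'⟩⟩)
    · have hm : m.apply w h = none := if_neg hg
      simp only [List.replicate_succ, run_cons, hm, Option.bind_none, reduceCtorEq, false_and,
        exists_false, iff_false]
      exact not_acceptsFrom_of_selfLoop hv hF ((if_neg hbound).trans (if_neg hg))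

theorem acceptsFrom_automaton_iff (hL : L <:+ prog) (hh : ValidHeads w h)
    (hC : ∀ c, C c ≤ w.length) :
    AcceptsFrom (automaton prog) w (config (state hL) h 0 C) ↔ Succeeds w L h C := by
  induction L generalizing h C with
  | nil => exact iff_of_true ⟨_, .refl, rfl⟩ trivial
  | cons ins L ih =>
    have hv : JValid w (config (state hL) h 0 C) :=
      jValid_config_iff.2 ⟨hh, fun c => ⟨Nat.zero_le _, hC c⟩⟩
    rcases ins with c | ⟨c, m | m⟩
    · rw [acceptsFrom_reset_iff hv (state_notMem_F hL) rfl, moveHeads_stay]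
      refine exists_congr fun b => and_congr_right fun hb => ?_
      rw [show Function.update (0 : Fin k → ℕ) c 0 = 0 from Function.update_eq_self c 0]
      exact ih _ hh ((Function.forall_update_iff C fun _ b => b ≤ w.length).2 ⟨hb, fun c _ => hC c⟩)
    · rw [acceptsFrom_once_iff hv]
      simp only [Succeeds, Op.moves, run_singleton]
      refine exists_congr fun h' => and_congr_right fun hm => ih _ ?_ hC
      exact hh.run ((run_singleton m h).trans hm)
    · rw [← Function.update_eq_self c (0 : Fin k → ℕ), Pi.zero_apply,
        acceptsFrom_loop_iff (zero_add _) hh hC]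
      exact exists_congr fun h' => and_congr_right fun hm => ih _ (hh.run hm) hC

theorem accepts_automaton_iff (prog : List (Instr k A)) (w : List A) :
    (automaton prog).Accepts w ↔ Succeeds w prog (0, 0) fun _ => 0 :=
  acceptsFrom_automaton_iff (h := (0, 0)) List.suffix_rfl ⟨le_rfl, Nat.zero_le _⟩
    fun _ => Nat.zero_le _

end Programs

section Allocation

variable {X κ : Type*} {D : List X} {col : X → κ}

/-- `col` assigns counters to the letters of `D` so that a letter occurring for the first time never
takes the counter of an earlier letter that is still needed later. -/
def IsAllocation (D : List X) (col : X → κ) : Prop :=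
  ∀ pre x post, D = pre ++ x :: post → x ∉ pre → ∀ y ∈ pre, y ∈ post → col y ≠ col x

theorem exists_isAllocation [DecidableEq X] {k : ℕ}
    (hD : ∀ pre x post, D = pre ++ x :: post → x ∉ pre →
      (pre.toFinset ∩ post.toFinset).card ≤ k) :
    ∃ col : X → Fin (k + 1), IsAllocation D col := by
  suffices greedy : ∀ n, ∃ col : X → Fin (k + 1), ∀ pre x post, D = pre ++ x :: post →
      pre.length < n → x ∉ pre → ∀ y ∈ pre, y ∈ post → col y ≠ col x by
    obtain ⟨col, hcol⟩ := greedy D.length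
    exact ⟨col, fun pre x post hsplit => hcol pre x post hsplit (by simp [hsplit])⟩
  intro n
  induction n with
  | zero => exact ⟨fun _ => 0, fun _ _ _ _ h => absurd h (Nat.not_lt_zero _)⟩
  | succ n ih =>
    obtain ⟨col, hcol⟩ := ih
    by_cases hnew : ∃ pre x post, D = pre ++ x :: post ∧ pre.length = n ∧ x ∉ pre
    · obtain ⟨pre, x, post, hsplit, rfl, hx⟩ := hnew
      obtain ⟨v, -, hv⟩ : ∃ v ∈ Finset.univ, v ∉ (pre.toFinset ∩ post.toFinset).image col := by
        refine Finset.exists_mem_notMem_of_card_lt_card ?_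
        calc ((pre.toFinset ∩ post.toFinset).image col).card
            ≤ k := Finset.card_image_le.trans (hD pre x post hsplit hx)
          _ < (Finset.univ : Finset (Fin (k + 1))).card := by simp
      refine ⟨Function.update col x v, fun pre' x' post' hsplit' hlen hx' y hy hy' => ?_⟩
      rcases Nat.lt_succ_iff_lt_or_eq.1 hlen with hlt | heq
      · have hprefix : pre' ++ [x'] <+: pre :=
          List.prefix_of_prefix_length_le (l₃ := D) (by simp [hsplit']) (by simp [hsplit])
            (by simpa using hlt)
        have hne : ∀ z ∈ pre' ++ [x'], z ≠ x := fun z hz h => hx (h ▸ hprefix.subset hz)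
        rw [Function.update_of_ne (hne y (by simp [hy])), Function.update_of_ne (hne x' (by simp))]
        exact hcol pre' x' post' hsplit' hlt hx' y hy hy'
      · obtain ⟨rfl, htail⟩ := List.append_inj (hsplit'.symm.trans hsplit) heq
        obtain ⟨rfl, rfl⟩ := List.cons.inj htail
        rw [Function.update_self, Function.update_of_ne (ne_of_mem_of_not_mem hy hx)]
        rintro rfl
        exact hv (Finset.mem_image_of_mem col (by simp [hy, hy']))
    · refine ⟨col, fun pre x post hsplit hlen hx => hcol pre x post hsplit ?_ hx⟩
      exact (Nat.lt_succ_iff_lt_or_eq.1 hlen).resolve_right fun h => hnew ⟨_, _, _, hsplit, h, hx⟩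

theorem card_inter_le_sVal (pre post : List ℕ) {x : ℕ} (hx : x ∉ pre) :
    (pre.toFinset ∩ post.toFinset).card ≤ sVal (pre ++ x :: post) pre.length := by
  refine Finset.card_le_card fun y hy => ?_
  obtain ⟨hpre, hpost⟩ : y ∈ pre ∧ y ∈ post := by simpa using hy
  obtain ⟨i, hi, rfl⟩ := List.getElem_of_mem hpre
  obtain ⟨j, hj, hij⟩ := List.getElem_of_mem hpost
  classical
  refine Finset.mem_filter.2 ⟨by simp, ?_, ⟨i, hi, ?_⟩, pre.length + 1 + j, by omega, ?_, ?_⟩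
  · simpa using ne_of_mem_of_not_mem hpre hx
  · rw [List.getD_append _ _ _ _ hi, List.getD_eq_getElem _ _ hi]
  · simp only [List.length_append, List.length_cons]
    omega
  · rw [List.getD_append_right _ _ _ _ (by omega), add_assoc, Nat.add_sub_cancel_left, add_comm 1,
      List.getD_cons_succ, List.getD_eq_getElem _ _ hj, hij]

variable {A : Type} {k : ℕ}

/-- The moves made by blocks of operations when the letter labelling a block determines, by `ℓ`, the
number of iterations of its loops. -/
def unroll (ℓ : X → ℕ) (B : List (X × List (Op A))) : List (Move A) :=
  B.flatMap fun b => b.2.flatMap (Op.moves (ℓ b.1))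

/-- The program executing blocks of operations, each with the counter of its letter, after the
letters `seen`. The bound of a counter is guessed at the first occurrence of a letter. -/
def compile [DecidableEq X] (col : X → Fin k) : List X → List (X × List (Op A)) → List (Instr k A)
  | _, [] => []
  | seen, (x, os) :: B =>
    (if x ∈ seen then [] else [.reset (col x)]) ++
      (os.map (.exec (col x)) ++ compile col (seen ++ [x]) B)

variable {w : List A}

theorem succeeds_map_exec_append_iff {c : Fin k} {os : List (Op A)} {L : List (Instr k A)}
    {h : ℕ × ℕ} {C : Fin k → ℕ} :
    Succeeds w (os.map (.exec c) ++ L) h C ↔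
      ∃ h', run w (os.flatMap (Op.moves (C c))) h = some h' ∧ Succeeds w L h' C := by
  induction os generalizing h with
  | nil => simp [run]
  | cons o os ih =>
    simp only [List.map_cons, List.cons_append, Succeeds, ih, List.flatMap_cons, run_append,
      Option.bind_eq_some_iff]
    tauto

theorem unroll_cons (ℓ : X → ℕ) (x : X) (os : List (Op A)) (B : List (X × List (Op A))) :
    unroll ℓ ((x, os) :: B) = os.flatMap (Op.moves (ℓ x)) ++ unroll ℓ B :=
  List.flatMap_cons

theorem unroll_append (ℓ : X → ℕ) (B B' : List (X × List (Op A))) :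
    unroll ℓ (B ++ B') = unroll ℓ B ++ unroll ℓ B' :=
  List.flatMap_append

theorem unroll_congr {ℓ ℓ' : X → ℕ} {B : List (X × List (Op A))}
    (h : ∀ x ∈ B.map Prod.fst, ℓ x = ℓ' x) : unroll ℓ B = unroll ℓ' B :=
  List.flatMap_congr fun b hb => by rw [h _ (List.mem_map_of_mem hb)]

/-- The blocks `B` can be run from `h` with iteration numbers that respect the counter bounds `C`
guessed for the letters `seen`. -/
def Runnable (w : List A) (col : X → Fin k) (seen : List X) (B : List (X × List (Op A)))
    (h : ℕ × ℕ) (C : Fin k → ℕ) : Prop :=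
  ∃ ℓ : X → ℕ, (∀ x, ℓ x ≤ w.length) ∧ (∀ y ∈ seen, y ∈ B.map Prod.fst → ℓ y = C (col y)) ∧
    ∃ h', run w (unroll ℓ B) h = some h'

variable {col : X → Fin k} {seen : List X} {x : X} {os : List (Op A)}
  {B : List (X × List (Op A))} {h : ℕ × ℕ} {C : Fin k → ℕ}

theorem runnable_append_singleton_iff_of_mem (hx : x ∈ seen) :
    Runnable w col (seen ++ [x]) B h C ↔ Runnable w col seen B h C := by
  have hmem (y : X) : y ∈ seen ++ [x] ↔ y ∈ seen := by
    simp only [List.mem_append, List.mem_singleton, or_iff_left_iff_imp]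
    rintro rfl
    exact hx
  simp only [Runnable, hmem]

theorem exists_runnable_update_iff
    (hcol : IsAllocation (seen ++ ((x, os) :: B).map Prod.fst) col) (hx : x ∉ seen) :
    (∃ v ≤ w.length,
      Runnable w col (seen ++ [x]) ((x, os) :: B) h (Function.update C (col x) v)) ↔
        Runnable w col seen ((x, os) :: B) h C := by
  have hold {y : X} (hy : y ∈ seen) (hyB : y ∈ ((x, os) :: B).map Prod.fst) (v : ℕ) :
      Function.update C (col x) v (col y) = C (col y) := by
    refine Function.update_of_ne (hcol _ _ _ rfl hx y hy ?_) _ _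
    exact (List.mem_cons.1 hyB).resolve_left (ne_of_mem_of_not_mem hy hx)
  constructor
  · rintro ⟨v, -, ℓ, hℓ, hseen, hrun⟩
    refine ⟨ℓ, hℓ, fun y hy hyB => ?_, hrun⟩
    rw [hseen y (List.mem_append_left _ hy) hyB, hold hy hyB]
  · rintro ⟨ℓ, hℓ, hseen, hrun⟩
    refine ⟨ℓ x, hℓ x, ℓ, hℓ, fun y hy hyB => ?_, hrun⟩
    rcases List.mem_append.1 hy with hy | hy
    · rw [hseen y hy hyB, hold hy hyB]
    · rw [List.mem_singleton.1 hy, Function.update_self]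

theorem runnable_append_singleton_cons_iff (hC : ∀ c, C c ≤ w.length) :
    Runnable w col (seen ++ [x]) ((x, os) :: B) h C ↔
      ∃ h₁, run w (os.flatMap (Op.moves (C (col x)))) h = some h₁ ∧
        Runnable w col (seen ++ [x]) B h₁ C := by
  simp only [Runnable, unroll_cons, run_append, Option.bind_eq_some_iff]
  constructor
  · rintro ⟨ℓ, hℓ, hseen, h', h₁, hos, hB⟩
    have hx : ℓ x = C (col x) := hseen x (by simp) (by simp)
    exact ⟨h₁, hx ▸ hos, ℓ, hℓ, fun y hy hyB => hseen y hy (List.mem_cons_of_mem _ hyB), h', hB⟩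
  · classical
    rintro ⟨h₁, hos, ℓ, hℓ, hseen, h', hB⟩
    have hupdate : ∀ y ∈ B.map Prod.fst, Function.update ℓ x (C (col x)) y = ℓ y := by
      intro y hy
      rcases eq_or_ne y x with rfl | hne
      · rw [Function.update_self, hseen y (by simp) hy]
      · exact Function.update_of_ne hne _ _
    refine ⟨Function.update ℓ x (C (col x)),
      (Function.forall_update_iff ℓ fun _ v => v ≤ w.length).2 ⟨hC _, fun y _ => hℓ y⟩,
      fun y hy hyB => ?_, h', h₁, by rwa [Function.update_self], by rwa [unroll_congr hupdate]⟩
    rcases List.mem_cons.1 hyB with rfl | hyB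
    · exact Function.update_self ..
    · rw [hupdate y hyB, hseen y hy hyB]

variable [DecidableEq X]

theorem succeeds_compile_iff (hcol : IsAllocation (seen ++ B.map Prod.fst) col)
    (hC : ∀ c, C c ≤ w.length) :
    Succeeds w (compile col seen B) h C ↔ Runnable w col seen B h C := by
  induction B generalizing seen h C with
  | nil => exact iff_of_true trivial ⟨fun _ => 0, fun _ => Nat.zero_le _, by simp, h, rfl⟩
  | cons b B ih =>
    obtain ⟨x, os⟩ := b
    have hbody (C : Fin k → ℕ) (hC : ∀ c, C c ≤ w.length) :
        Succeeds w (os.map (.exec (col x)) ++ compile col (seen ++ [x]) B) h C ↔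
          Runnable w col (seen ++ [x]) ((x, os) :: B) h C := by
      rw [succeeds_map_exec_append_iff, runnable_append_singleton_cons_iff hC]
      exact exists_congr fun h₁ => and_congr_right fun _ => ih (by simpa using hcol) hC
    by_cases hx : x ∈ seen
    · rw [compile, if_pos hx, List.nil_append, hbody C hC, runnable_append_singleton_iff_of_mem hx]
    · rw [compile, if_neg hx, ← exists_runnable_update_iff hcol hx]
      exact exists_congr fun v => and_congr_right fun hv => hbody _
        ((Function.forall_update_iff C fun _ v => v ≤ w.length).2 ⟨hv, fun c _ => hC c⟩)

theorem exists_automaton_accepts_iff (B : List (X × List (Op A)))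
    (hB : ∀ pre x post, B.map Prod.fst = pre ++ x :: post → x ∉ pre →
      (pre.toFinset ∩ post.toFinset).card ≤ k) :
    ∃ M : JFA (k + 1) A, ∀ w, M.Accepts w ↔ ∃ ℓ : X → ℕ, (∀ x, ℓ x ≤ w.length) ∧
      ∃ h', run w (unroll ℓ B) (1, 1) = some h' := by
  obtain ⟨col, hcol⟩ := exists_isAllocation hB
  refine ⟨automaton (.exec 0 (.once ⟨fun _ _ => True, .right, .right⟩) :: compile col [] B),
    fun w => ?_⟩
  have hstart (h : ℕ × ℕ) :
      run w [⟨fun _ _ => True, .right, .right⟩] (0, 0) = some h ↔ h = (1, 1) := by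
    simp [run_singleton, Move.apply_eq_some_iff, moveHeads, HInstr.toInt]
  simp only [accepts_automaton_iff, Succeeds, Op.moves, hstart, exists_eq_left]
  rw [succeeds_compile_iff (by simpa using hcol) fun _ => Nat.zero_le _]
  simp [Runnable]

end Allocation

section Moves

variable {A : Type} {w : List A}

theorem tapeSym_succ_eq_ch_iff {h : ℕ} {a : A} : tapeSym w (h + 1) = .ch a ↔ w[h]? = some a := by
  unfold tapeSym
  rw [if_neg h.succ_ne_zero, Nat.add_sub_cancel]
  cases w[h]? <;> simp

theorem tapeSym_succ_eq_rend_iff {h : ℕ} : tapeSym w (h + 1) = .rend ↔ w.length ≤ h := by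
  unfold tapeSym
  rw [if_neg h.succ_ne_zero, Nat.add_sub_cancel, ← List.getElem?_eq_none_iff]
  cases w[h]? <;> simp

theorem moveHeads_eq_of_validHeads {d₁ d₂ : HInstr} {h h' : ℕ × ℕ} (hh' : ValidHeads w h')
    (hleft : h.1 + d₁.toInt = h'.1) (hright : h.2 + d₂.toInt = h'.2) :
    moveHeads w.length d₁ d₂ h = h' := by
  obtain ⟨hle, hend⟩ := hh'
  rw [moveHeads, if_pos (by omega), hleft, hright]
  rfl

theorem run_replicate_eq_some_iff {m : Move A} {f : ℕ → ℕ × ℕ} {P : ℕ → Prop} {v : ℕ} {h' : ℕ × ℕ}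
    (hm : ∀ t < v, ∀ h', m.apply w (f t) = some h' ↔ P t ∧ h' = f (t + 1)) :
    run w (List.replicate v m) (f 0) = some h' ↔ (∀ t < v, P t) ∧ h' = f v := by
  induction v generalizing h' with
  | zero => simp [run, eq_comm]
  | succ v ih =>
    simp only [List.replicate_succ', run_append, Option.bind_eq_some_iff, run_singleton,
      ih fun t ht => hm t (by omega), Nat.forall_lt_succ_right]
    constructor
    · rintro ⟨_, ⟨hP, rfl⟩, hv⟩
      obtain ⟨hPv, rfl⟩ := (hm v v.lt_succ_self _).1 hv
      exact ⟨⟨hP, hPv⟩, rfl⟩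
    · rintro ⟨⟨hP, hPv⟩, rfl⟩
      exact ⟨_, ⟨hP, rfl⟩, (hm v v.lt_succ_self _).2 ⟨hPv, rfl⟩⟩

theorem run_replicate_eq_some {m : Move A} {f : ℕ → ℕ × ℕ} {v : ℕ}
    (hm : ∀ t < v, m.apply w (f t) = some (f (t + 1))) :
    run w (List.replicate v m) (f 0) = some (f v) :=
  (run_replicate_eq_some_iff (P := fun _ => True) fun t ht h' => by
    rw [hm t ht, Option.some_inj, true_and, eq_comm]).2 ⟨fun _ _ => trivial, rfl⟩

/-- The unconditional move with the given head instructions. -/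
def Move.free (d₁ d₂ : HInstr) : Move A := ⟨fun _ _ => True, d₁, d₂⟩

theorem Move.free_apply {d₁ d₂ : HInstr} {h h' : ℕ × ℕ} (hh' : ValidHeads w h')
    (hleft : h.1 + d₁.toInt = h'.1) (hright : h.2 + d₂.toInt = h'.2) :
    (Move.free d₁ d₂).apply w h = some h' :=
  Move.apply_eq_some_iff.2 ⟨trivial, (moveHeads_eq_of_validHeads hh' hleft hright).symm⟩

/-- The right head moves to the right unless it scans the right endmarker. -/
def Move.advance : Move A := ⟨fun _ b => b ≠ .rend, .stay, .right⟩

/-- Both heads move to the right if they scan the same input symbol. -/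
def Move.compare : Move A := ⟨fun a b => a = b ∧ b ≠ .rend, .right, .right⟩

/-- The heads stay if the right one scans the right endmarker. -/
def Move.testEnd : Move A := ⟨fun _ b => b = .rend, .stay, .stay⟩

theorem run_replicate_advance {s t v : ℕ} (hst : s ≤ t) (ht : t ≤ w.length) {h' : ℕ × ℕ} :
    run w (List.replicate v .advance) (s + 1, t + 1) = some h' ↔
      t + v ≤ w.length ∧ h' = (s + 1, t + v + 1) := by
  refine (run_replicate_eq_some_iff (f := fun i => (s + 1, t + i + 1))
    (P := fun i => t + i < w.length) fun i _ h' => ?_).trans (and_congr_left' ?_)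
  · simp only [Move.apply_eq_some_iff, Move.advance, ne_eq, tapeSym_succ_eq_rend_iff, not_le]
    refine and_congr_right fun hlt => ?_
    rw [moveHeads_eq_of_validHeads (h' := (s + 1, t + (i + 1) + 1))] <;>
      simp only [ValidHeads, HInstr.toInt] <;> omega
  · cases v with
    | zero => simpa using ht
    | succ v => exact ⟨fun h => h v v.lt_succ_self, fun h i hi => by omega⟩

theorem compare_apply {s t : ℕ} (hst : s ≤ t) {h' : ℕ × ℕ} :
    Move.compare.apply w (s + 1, t + 1) = some h' ↔
      (t < w.length ∧ w[s]? = w[t]?) ∧ h' = (s + 2, t + 2) := by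
  simp only [Move.apply_eq_some_iff, Move.compare, ne_eq, tapeSym_succ_eq_rend_iff, not_le]
  have hsymb : t < w.length →
      (tapeSym w (s + 1) = tapeSym w (t + 1) ↔ w[s]? = w[t]?) := fun hlt => by
    have ht := List.getElem?_eq_getElem hlt
    rw [tapeSym_succ_eq_ch_iff.2 ht, tapeSym_succ_eq_ch_iff, ht]
  rw [and_comm (a := tapeSym w (s + 1) = _), and_congr_right hsymb]
  refine and_congr_right fun ⟨_, _⟩ => ?_
  rw [moveHeads_eq_of_validHeads (h' := (s + 2, t + 2))] <;>
    simp only [ValidHeads, HInstr.toInt] <;> omega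

theorem take_drop_eq_take_drop_iff {s t v : ℕ} :
    (w.drop s).take v = (w.drop t).take v ↔ ∀ i < v, w[s + i]? = w[t + i]? := by
  simp only [List.ext_getElem?_iff, List.getElem?_take, List.getElem?_drop]
  refine forall_congr' fun i => ?_
  split_ifs with hi <;> simp [hi]

theorem run_replicate_compare {s t v : ℕ} (hst : s ≤ t) (ht : t ≤ w.length) {h' : ℕ × ℕ} :
    run w (List.replicate v .compare) (s + 1, t + 1) = some h' ↔
      (t + v ≤ w.length ∧ (w.drop s).take v = (w.drop t).take v) ∧
        h' = (s + v + 1, t + v + 1) := by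
  refine (run_replicate_eq_some_iff (f := fun i => (s + i + 1, t + i + 1))
    (P := fun i => t + i < w.length ∧ w[s + i]? = w[t + i]?) fun i _ h' =>
      compare_apply (by omega)).trans (and_congr_left' ?_)
  rw [take_drop_eq_take_drop_iff]
  refine forall₂_and.trans (and_congr_left' ?_)
  cases v with
  | zero => simpa using ht
  | succ v => exact ⟨fun h => h v v.lt_succ_self, fun h i hi => by omega⟩

theorem testEnd_apply {s t : ℕ} (ht : t ≤ w.length) {h' : ℕ × ℕ} :
    Move.testEnd.apply w (s, t + 1) = some h' ↔ w.length = t ∧ h' = (s, t + 1) := by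
  simp only [Move.apply_eq_some_iff, Move.testEnd, tapeSym_succ_eq_rend_iff, moveHeads_stay]
  rw [ht.ge_iff_eq']

end Moves

section Gaps

variable {A : Type} {w : List A} {α : List ℕ} {ℓ : ℕ → ℕ}

/-- The length of the image of the first `j` variables of `α` when the image of `x` has length
`ℓ x`. -/
def offset (α : List ℕ) (ℓ : ℕ → ℕ) (j : ℕ) : ℕ := ((α.take j).map ℓ).sum

theorem offset_succ {j : ℕ} (hj : j < α.length) :
    offset α ℓ (j + 1) = offset α ℓ j + ℓ (patAt α (j + 1)) := by
  rw [offset, List.take_succ_eq_append_getElem hj, List.map_append, List.sum_append, patAt_succ hj]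
  simp [offset]

theorem offset_mono : Monotone (offset α ℓ) := fun _ _ hij =>
  ((List.take_sublist_take_left hij).map ℓ).sum_le_sum fun _ _ => Nat.zero_le _

theorem offset_le_offset_length (j : ℕ) : offset α ℓ j ≤ offset α ℓ α.length := by
  rcases le_total j α.length with h | h
  · exact offset_mono h
  · rw [offset, offset, List.take_of_length_le h, List.take_length]

/-- The head positions that represent two gaps of `α`, where the gap `j` follows the first `j`
variables. The heads are interchangeable: the left head stands at the smaller of the two gaps. -/
def gapHeads (α : List ℕ) (ℓ : ℕ → ℕ) (g : ℕ × ℕ) : ℕ × ℕ :=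
  (offset α ℓ (min g.1 g.2) + 1, offset α ℓ (max g.1 g.2) + 1)

/-- The images of the variables before both gaps of `g` fit into `w`. -/
def Fits (w : List A) (α : List ℕ) (ℓ : ℕ → ℕ) (g : ℕ × ℕ) : Prop :=
  offset α ℓ (max g.1 g.2) ≤ w.length

/-- The factor of `w` at the place of the image of the `j`-th variable of `α`. -/
def factor (w : List A) (α : List ℕ) (ℓ : ℕ → ℕ) (j : ℕ) : List A :=
  (w.drop (offset α ℓ (j - 1))).take (ℓ (patAt α j))

/-- The factors of `w` at the two positions `p` of `α` coincide and, if the second position is the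
last one of `α`, it is the end of `w`. -/
def Matches (w : List A) (α : List ℕ) (ℓ : ℕ → ℕ) (p : ℕ × ℕ) : Prop :=
  factor w α ℓ p.1 = factor w α ℓ p.2 ∧ (p.2 = α.length → w.length = offset α ℓ α.length)

/-- Starting with the heads at the gaps `g`, the moves `ms` can only lead to the gaps `g'`, and only
if all pairs in `K` match; conversely they do so if in addition the image of `α` has length
`|w|`. -/
structure Realizes (w : List A) (α : List ℕ) (ℓ : ℕ → ℕ) (ms : List (Move A)) (g g' : ℕ × ℕ)
    (K : List (ℕ × ℕ)) : Prop where
  sound : Fits w α ℓ g → ∀ h', run w ms (gapHeads α ℓ g) = some h' →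
    h' = gapHeads α ℓ g' ∧ Fits w α ℓ g' ∧ ∀ p ∈ K, Matches w α ℓ p
  complete : w.length = offset α ℓ α.length → (∀ p ∈ K, Matches w α ℓ p) →
    run w ms (gapHeads α ℓ g) = some (gapHeads α ℓ g')

variable {ms ms' : List (Move A)} {g g' g'' : ℕ × ℕ} {K K' : List (ℕ × ℕ)}

theorem fits_of_length_eq (h : w.length = offset α ℓ α.length) : Fits w α ℓ g :=
  (offset_le_offset_length _).trans_eq h.symm

theorem Realizes.of_iff (h : Fits w α ℓ g → ∀ h', run w ms (gapHeads α ℓ g) = some h' ↔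
    (Fits w α ℓ g' ∧ ∀ p ∈ K, Matches w α ℓ p) ∧ h' = gapHeads α ℓ g') :
    Realizes w α ℓ ms g g' K where
  sound hg h' hrun := by
    obtain ⟨⟨hg', hK⟩, rfl⟩ := (h hg h').1 hrun
    exact ⟨rfl, hg', hK⟩
  complete htotal hK := (h (fits_of_length_eq htotal) _).2 ⟨⟨fits_of_length_eq htotal, hK⟩, rfl⟩

theorem Realizes.nil (g : ℕ × ℕ) : Realizes w α ℓ [] g g [] where
  sound hg _ hrun := ⟨(Option.some.inj hrun).symm, hg, by simp⟩
  complete _ _ := rfl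

theorem Realizes.append (h : Realizes w α ℓ ms g g' K) (h' : Realizes w α ℓ ms' g' g'' K') :
    Realizes w α ℓ (ms ++ ms') g g'' (K ++ K') where
  sound hg h₂ hrun := by
    rw [run_append, Option.bind_eq_some_iff] at hrun
    obtain ⟨h₁, hms, hms'⟩ := hrun
    obtain ⟨rfl, hg', hK⟩ := h.sound hg h₁ hms
    obtain ⟨rfl, hg'', hK'⟩ := h'.sound hg' h₂ hms'
    exact ⟨rfl, hg'', List.forall_mem_append.2 ⟨hK, hK'⟩⟩
  complete htotal hKK' := by
    obtain ⟨hK, hK'⟩ := List.forall_mem_append.1 hKK'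
    rw [run_append, h.complete htotal hK]
    exact h'.complete htotal hK'

theorem Realizes.swap {a b a' b' : ℕ} (h : Realizes w α ℓ ms (a, b) (a', b') K) :
    Realizes w α ℓ ms (b, a) (b', a') K where
  sound := by
    simpa only [Fits, gapHeads, max_comm, min_comm] using h.sound
  complete := by
    simpa only [gapHeads, max_comm, min_comm] using h.complete

/-- Moves a head rightwards across the `q + 1`-st variable while the other head is at the gap
`b`. -/
def crossRight (q b : ℕ) : Op A :=
  .loop (if q < b then .free .right .stay else .advance)

/-- Moves a head leftwards across the `q + 1`-st variable while the other head is at the gap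
`b`. -/
def crossLeft (q b : ℕ) : Op A :=
  .loop (if q < b then .free .left .stay else .free .stay .left)

theorem realizes_crossRight {q : ℕ} (b : ℕ) (hq : q < α.length) :
    Realizes w α ℓ ((crossRight q b).moves (ℓ (patAt α (q + 1)))) (q, b) (q + 1, b) [] := by
  refine .of_iff fun hfit h' => ?_
  have hstep := offset_succ (ℓ := ℓ) hq
  unfold Fits at hfit ⊢
  rw [crossRight, Op.moves]
  split_ifs with hqb
  · have hqb' : q + 1 ≤ b := hqb
    have hle : offset α ℓ (q + 1) ≤ offset α ℓ b := offset_mono hqb'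
    simp only [gapHeads, min_eq_left hqb.le, max_eq_right hqb.le, min_eq_left hqb',
      max_eq_right hqb'] at hfit ⊢
    have hrun := run_replicate_eq_some (w := w) (m := .free .right .stay)
      (v := ℓ (patAt α (q + 1))) (f := fun i => (offset α ℓ q + i + 1, offset α ℓ b + 1))
      fun i hi => Move.free_apply (by constructor <;> dsimp only <;> omega)
        (by simp [HInstr.toInt]; omega) (by simp [HInstr.toInt])
    simp only [add_zero] at hrun
    simp [hrun, hfit, hstep, eq_comm]
  · have hbq : b ≤ q := not_lt.1 hqb
    have hbq' : b ≤ q + 1 := Nat.le_succ_of_le hbq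
    have hle : offset α ℓ b ≤ offset α ℓ q := offset_mono hbq
    simp only [gapHeads, min_eq_right hbq, max_eq_left hbq, min_eq_right hbq',
      max_eq_left hbq'] at hfit ⊢
    simp [run_replicate_advance hle hfit, hstep]

theorem realizes_crossLeft {q : ℕ} (b : ℕ) (hq : q < α.length) :
    Realizes w α ℓ ((crossLeft q b).moves (ℓ (patAt α (q + 1)))) (q + 1, b) (q, b) [] := by
  refine .of_iff fun hfit h' => ?_
  have hstep := offset_succ (ℓ := ℓ) hq
  unfold Fits at hfit ⊢
  rw [crossLeft, Op.moves]
  split_ifs with hqb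
  · have hqb' : q + 1 ≤ b := hqb
    have hle : offset α ℓ (q + 1) ≤ offset α ℓ b := offset_mono hqb'
    simp only [gapHeads, min_eq_left hqb.le, max_eq_right hqb.le,
      min_eq_left hqb', max_eq_right hqb'] at hfit ⊢
    have hrun := run_replicate_eq_some (w := w) (m := .free .left .stay)
      (v := ℓ (patAt α (q + 1))) (f := fun i => (offset α ℓ (q + 1) - i + 1, offset α ℓ b + 1))
      fun i hi => Move.free_apply (by constructor <;> dsimp only <;> omega)
        (by simp [HInstr.toInt]; omega) (by simp [HInstr.toInt])
    simp only [hstep, Nat.sub_zero, Nat.add_sub_cancel] at hrun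
    simp [hrun, hfit, hstep, eq_comm]
  · have hbq : b ≤ q := not_lt.1 hqb
    have hbq' : b ≤ q + 1 := Nat.le_succ_of_le hbq
    have hle : offset α ℓ b ≤ offset α ℓ q := offset_mono hbq
    simp only [gapHeads, min_eq_right hbq, max_eq_left hbq, min_eq_right hbq',
      max_eq_left hbq'] at hfit ⊢
    have hrun := run_replicate_eq_some (w := w) (m := .free .stay .left)
      (v := ℓ (patAt α (q + 1))) (f := fun i => (offset α ℓ b + 1, offset α ℓ (q + 1) - i + 1))
      fun i hi => Move.free_apply (by constructor <;> dsimp only <;> omega)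
        (by simp [HInstr.toInt]) (by simp [HInstr.toInt]; omega)
    simp only [hstep, Nat.sub_zero, Nat.add_sub_cancel] at hrun
    have hfit' : offset α ℓ q ≤ w.length := by omega
    simp [hrun, hfit', hstep, eq_comm]

/-- Compares the factors to the right of the two heads, the right one of which is at the gap `r`. If
the latter belongs to the last variable, it has to end the input. -/
def matchOps (α : List ℕ) (r : ℕ) : List (Op A) :=
  .loop .compare :: if r + 1 = α.length then [.once .testEnd] else []

theorem realizes_matchOps {l r : ℕ} (hlr : l < r) (hr : r < α.length)
    (hvar : patAt α (l + 1) = patAt α (r + 1)) :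
    Realizes w α ℓ ((matchOps α r).flatMap (Op.moves (ℓ (patAt α (l + 1))))) (l, r)
      (l + 1, r + 1) [(l + 1, r + 1)] := by
  refine .of_iff fun hfit h' => ?_
  have hstepl := offset_succ (ℓ := ℓ) (hlr.trans hr)
  have hstepr := offset_succ (ℓ := ℓ) hr
  have hle : offset α ℓ l ≤ offset α ℓ r := offset_mono hlr.le
  have hlr' : l + 1 ≤ r + 1 := Nat.succ_le_succ hlr.le
  simp only [Fits, gapHeads, min_eq_left hlr.le, max_eq_right hlr.le, min_eq_left hlr',
    max_eq_right hlr', List.forall_mem_singleton, Matches, factor, Nat.add_sub_cancel, hvar]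
    at hfit hstepl ⊢
  rw [matchOps, List.flatMap_cons, Op.moves, run_append, Option.bind_eq_some_iff]
  simp only [run_replicate_compare hle hfit, ← hstepl, ← hstepr, and_assoc]
  split_ifs with hend
  · constructor
    · rintro ⟨_, hfit', heq, rfl, hrun⟩
      rw [List.flatMap_singleton, Op.moves, run_singleton, testEnd_apply hfit'] at hrun
      exact ⟨hfit', heq, fun _ => hend ▸ hrun.1, hrun.2⟩
    · rintro ⟨hfit', heq, hlen, rfl⟩
      refine ⟨_, hfit', heq, rfl, ?_⟩
      rw [List.flatMap_singleton, Op.moves, run_singleton, testEnd_apply hfit', hend]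
      exact ⟨hlen hend, rfl⟩
  · simp [run, hend, eq_comm]

end Gaps

section OperatingModes

variable {A : Type} {α : List ℕ} {ℓ : ℕ → ℕ} {m : ℕ}

/-- A head walks from the gap `a` to the gap `c` across the listed positions of a pattern of length
`m`. -/
inductive Walk (m : ℕ) : ℕ → List ℕ → ℕ → Prop
  | nil (a : ℕ) : Walk m a [] a
  | right {q c : ℕ} {L : List ℕ} : q < m → Walk m (q + 1) L c → Walk m q ((q + 1) :: L) c
  | left {q c : ℕ} {L : List ℕ} : q < m → Walk m q L c → Walk m (q + 1) ((q + 1) :: L) c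

theorem walk_range' {a d : ℕ} (h : a + d ≤ m) : Walk m a (List.range' (a + 1) d) (a + d) := by
  induction d generalizing a with
  | zero => exact .nil a
  | succ d ih =>
    rw [List.range'_succ, add_comm d, ← add_assoc]
    exact .right (by omega) (ih (by omega))

theorem walk_reverse_range' {a d : ℕ} (h : a + d ≤ m) :
    Walk m (a + d) (List.range' (a + 1) d).reverse a := by
  induction d with
  | zero => exact .nil a
  | succ d ih =>
    rw [List.range'_1_concat, List.reverse_append, List.reverse_singleton, add_right_comm]
    exact .left (q := a + d) (by omega) (ih (by omega))

theorem exists_walk_gfun {j q : ℕ} (hj : j ≤ m) (hq : q < m) :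
    ∃ c, (c = q ∨ c = q + 1) ∧ Walk m j (gfun j (q + 1)) c := by
  unfold gfun
  split_ifs with hlt hgt
  · refine ⟨q, .inl rfl, ?_⟩
    rw [← List.range'_eq_map_range]
    convert walk_range' (m := m) (a := j) (d := q + 1 - j - 1) (by omega) using 1
    omega
  · refine ⟨q, .inl rfl, ?_⟩
    convert walk_reverse_range' (m := m) (a := q) (d := j - (q + 1) + 1) (by omega) using 1
    · omega
    · rw [List.reverse_range']
      congr! 2
      omega
  · exact ⟨j, by omega, .nil j⟩

theorem Walk.exists_cross {a p c : ℕ} {L : List ℕ} (h : Walk α.length a (p :: L) c) (b : ℕ) :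
    ∃ a', Walk α.length a' L c ∧ ∃ o : Op A, ∀ w ℓ,
      Realizes w α ℓ (o.moves (ℓ (patAt α p))) (a, b) (a', b) [] := by
  cases h with
  | right hq h => exact ⟨_, h, _, fun _ _ => realizes_crossRight b hq⟩
  | left hq h => exact ⟨_, h, _, fun _ _ => realizes_crossLeft b hq⟩

theorem Realizes.block {w : List A} {x : ℕ} {os : List (Op A)} {B : List (ℕ × List (Op A))}
    {g g' g'' : ℕ × ℕ} {K K' : List (ℕ × ℕ)}
    (h : Realizes w α ℓ (os.flatMap (Op.moves (ℓ x))) g g' K)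
    (h' : Realizes w α ℓ (unroll ℓ B) g' g'' K') :
    Realizes w α ℓ (unroll ℓ ((x, os) :: B)) g g'' (K ++ K') := by
  rw [unroll_cons]
  exact h.append h'

theorem exists_realizes_interleaving {D : List (ℕ × Marker)} {a b a' b' : ℕ}
    (hlam : Walk α.length a ((D.filter fun e => e.2 = Marker.lam).map Prod.fst) a')
    (hrho : Walk α.length b ((D.filter fun e => e.2 = Marker.rho).map Prod.fst) b') :
    ∃ B : List (ℕ × List (Op A)), B.map Prod.fst = D.map (fun e => patAt α e.1) ∧
      ∀ w ℓ, Realizes w α ℓ (unroll ℓ B) (a, b) (a', b') [] := by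
  induction D generalizing a b with
  | nil =>
    cases hlam
    cases hrho
    exact ⟨[], rfl, fun _ _ => .nil _⟩
  | cons e D ih =>
    obtain ⟨p, μ⟩ := e
    cases μ with
    | lam =>
      obtain ⟨a₁, hlam, o, ho⟩ := hlam.exists_cross (A := A) b
      obtain ⟨B, hB, hD⟩ := ih hlam hrho
      refine ⟨(patAt α p, [o]) :: B, by simp [hB], fun w ℓ => Realizes.block (K := []) ?_ (hD w ℓ)⟩
      simpa using ho w ℓ
    | rho =>
      obtain ⟨b₁, hrho, o, ho⟩ := hrho.exists_cross (A := A) a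
      obtain ⟨B, hB, hD⟩ := ih hlam hrho
      refine ⟨(patAt α p, [o]) :: B, by simp [hB], fun w ℓ => Realizes.block (K := []) ?_ (hD w ℓ)⟩
      simpa using (ho w ℓ).swap

theorem exists_realizes_backtrack {q a : ℕ} (ha : a = q ∨ a = q + 1) (hq : q < α.length) (b : ℕ) :
    ∃ os : List (Op A), ∀ w ℓ,
      Realizes w α ℓ (os.flatMap (Op.moves (ℓ (patAt α (q + 1))))) (a, b) (q, b) [] := by
  rcases ha with rfl | rfl
  · exact ⟨[], fun _ _ => .nil _⟩
  · exact ⟨[crossLeft q b], fun w ℓ => by simpa using realizes_crossLeft b hq⟩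

theorem exists_realizes_round {D : List (ℕ × Marker)} {g p : ℕ × ℕ} {x : ℕ}
    (hg : g.1 ≤ α.length ∧ g.2 ≤ α.length) (hp₁ : p.1 ∈ varpos α x) (hp₂ : p.2 ∈ varpos α x)
    (hp : p.1 < p.2)
    (hlam : D.filter (fun e => e.2 = Marker.lam) = (gfun g.1 p.1).map (·, Marker.lam))
    (hrho : D.filter (fun e => e.2 = Marker.rho) = (gfun g.2 p.2).map (·, Marker.rho)) :
    ∃ B : List (ℕ × List (Op A)),
      B.map Prod.fst =
        (D ++ [(p.2, Marker.rho), (p.1, Marker.lam)]).map (fun e => patAt α e.1) ∧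
      ∀ w ℓ, Realizes w α ℓ (unroll ℓ B) g p [p] := by
  obtain ⟨⟨hp₁pos, hl⟩, hp₁x⟩ := mem_varpos.1 hp₁
  obtain ⟨⟨hp₂pos, hr⟩, hp₂x⟩ := mem_varpos.1 hp₂
  obtain ⟨l, r, rfl⟩ : ∃ l r, p = (l + 1, r + 1) :=
    ⟨p.1 - 1, p.2 - 1, Prod.ext (by dsimp only; omega) (by dsimp only; omega)⟩
  obtain ⟨ha, hb⟩ := hg
  have hlr : l < r := Nat.lt_of_succ_lt_succ hp
  replace hl : l < α.length := hl
  replace hr : r < α.length := hr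
  obtain ⟨a', ha', hwalkl⟩ := exists_walk_gfun ha hl
  obtain ⟨b', hb', hwalkr⟩ := exists_walk_gfun hb hr
  obtain ⟨B, hB, hD⟩ := exists_realizes_interleaving (A := A) (D := D) (a' := a') (b' := b')
    (by rw [hlam, List.map_map]; convert hwalkl; exact List.map_id _)
    (by rw [hrho, List.map_map]; convert hwalkr; exact List.map_id _)
  obtain ⟨os, hos⟩ := exists_realizes_backtrack (A := A) hb' hr a'
  obtain ⟨os', hos'⟩ := exists_realizes_backtrack (A := A) ha' hl r
  refine ⟨B ++ [(patAt α (r + 1), os), (patAt α (l + 1), os' ++ matchOps α r)], by simp [hB],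
    fun w ℓ => ?_⟩
  rw [unroll_append]
  refine (hD w ℓ).append ((hos w ℓ).swap.block (Realizes.block (K := [(l + 1, r + 1)]) ?_ (.nil _)))
  rw [List.flatMap_append]
  exact (hos' w ℓ).append (realizes_matchOps hlr hr (hp₁x.trans hp₂x.symm))

/-- The pair that precedes the `i`-th one in `C`, which is `(0, 0)` for the initial one. -/
def precedingPair (C : List (ℕ × ℕ)) (i : ℕ) : ℕ × ℕ := ((0, 0) :: C).getD i (0, 0)

theorem precedingPair_fst (C : List (ℕ × ℕ)) (i : ℕ) :
    (precedingPair C i).1 = if i = 0 then 0 else (C.getD (i - 1) (0, 0)).1 := by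
  cases i <;> rfl

theorem precedingPair_snd (C : List (ℕ × ℕ)) (i : ℕ) :
    (precedingPair C i).2 = if i = 0 then 0 else (C.getD (i - 1) (0, 0)).2 := by
  cases i <;> rfl

theorem precedingPair_succ {C : List (ℕ × ℕ)} {i : ℕ} (hi : i < C.length) :
    precedingPair C (i + 1) = C[i] := by
  rw [precedingPair, List.getD_cons_succ, List.getD_eq_getElem _ _ hi]

theorem precedingPair_le_length {C : List (ℕ × ℕ)} (hC : IsCompleteMatchingOrder α C) {i : ℕ}
    (hi : i ≤ C.length) :
    (precedingPair C i).1 ≤ α.length ∧ (precedingPair C i).2 ≤ α.length := by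
  cases i with
  | zero => exact ⟨Nat.zero_le _, Nat.zero_le _⟩
  | succ i =>
    obtain ⟨x, hl, hr, -⟩ := exists_varpos_of_mem hC (C.getElem_mem hi)
    rw [precedingPair_succ hi]
    exact ⟨(mem_varpos.1 hl).1.2, (mem_varpos.1 hr).1.2⟩

theorem exists_blocks_of_isJanusOperatingMode {Δ : List (List (ℕ × Marker))}
    (hΔ : IsJanusOperatingMode α Δ) :
    ∃ C, IsCompleteMatchingOrder α C ∧
      ∃ B : List (ℕ × List (Op A)), B.map Prod.fst = hmiVars α Δ ∧
        ∃ g, ∀ w ℓ, Realizes w α ℓ (unroll ℓ B) (0, 0) g C := by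
  obtain ⟨C, hC, hlen, hD⟩ := hΔ
  suffices rounds : ∀ i ≤ C.length, ∃ B : List (ℕ × List (Op A)),
      B.map Prod.fst = hmiVars α (Δ.take i) ∧
      ∀ w ℓ, Realizes w α ℓ (unroll ℓ B) (0, 0) (precedingPair C i) (C.take i) by
    obtain ⟨B, hB, hreal⟩ := rounds C.length le_rfl
    rw [← hlen, List.take_length] at hB
    rw [List.take_length] at hreal
    exact ⟨C, hC, B, hB, _, hreal⟩
  intro i hi
  induction i with
  | zero => exact ⟨[], by simp [hmiVars, hmi], fun _ _ => .nil _⟩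
  | succ i ih =>
    obtain ⟨B, hB, hreal⟩ := ih (by omega)
    obtain ⟨D, hlam, hrho, -, hDi⟩ := hD i hi
    rw [← precedingPair_fst, List.getD_eq_getElem _ _ hi] at hlam
    rw [← precedingPair_snd, List.getD_eq_getElem _ _ hi] at hrho
    rw [List.getD_eq_getElem _ _ (hlen ▸ hi), List.getD_eq_getElem _ _ hi] at hDi
    obtain ⟨x, hl, hr, hlr⟩ := exists_varpos_of_mem hC (C.getElem_mem hi)
    obtain ⟨B', hB', hreal'⟩ := exists_realizes_round (A := A)
      (precedingPair_le_length hC (Nat.le_of_succ_le hi)) hl hr hlr hlam hrho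
    refine ⟨B ++ B', ?_, fun w ℓ => ?_⟩
    · rw [List.take_succ_eq_append_getElem (hlen ▸ hi), List.map_append, hB, hB', ← hDi]
      simp only [hmiVars, hmi, List.flatten_append, List.flatten_singleton, List.map_append]
    · rw [unroll_append, List.take_succ_eq_append_getElem hi, precedingPair_succ hi]
      exact (hreal w ℓ).append (hreal' w ℓ)

end OperatingModes

section Languages

variable {A : Type} {w : List A} {α : List ℕ} {ℓ ℓ' : ℕ → ℕ} {C : List (ℕ × ℕ)} {j : ℕ}

theorem take_offset_succ (hj : j < α.length) :
    w.take (offset α ℓ (j + 1)) = w.take (offset α ℓ j) ++ factor w α ℓ (j + 1) := by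
  rw [offset_succ hj, List.take_add, factor, Nat.add_sub_cancel]

theorem offset_congr (h : ∀ x ∈ α.take j, ℓ x = ℓ' x) : offset α ℓ j = offset α ℓ' j :=
  congrArg List.sum (List.map_congr_left h)

theorem factor_congr (hj : j < α.length) (h : ∀ x ∈ α.take (j + 1), ℓ x = ℓ' x) :
    factor w α ℓ (j + 1) = factor w α ℓ' (j + 1) := by
  rw [List.take_succ_eq_append_getElem hj, List.forall_mem_append, List.forall_mem_singleton] at h
  rw [factor, factor, patAt_succ hj, Nat.add_sub_cancel, offset_congr h.1, h.2]

theorem factor_eq_of_patAt_eq (hC : IsCompleteMatchingOrder α C)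
    (hfactor : ∀ p ∈ C, factor w α ℓ p.1 = factor w α ℓ p.2) {x a b : ℕ}
    (ha : a ∈ varpos α x) (hb : b ∈ varpos α x) : factor w α ℓ a = factor w α ℓ b := by
  have hab := reflTransGen_linked hC ha hb
  clear hb
  induction hab with
  | refl => rfl
  | tail _ hlink ih => exact ih.trans (hlink.elim (hfactor _) fun h => (hfactor _ h).symm)

theorem mem_patternLang_of_factor_eq (hC : IsCompleteMatchingOrder α C)
    (hfactor : ∀ p ∈ C, factor w α ℓ p.1 = factor w α ℓ p.2)
    (hlen : w.length ≤ offset α ℓ α.length) : w ∈ PatternLang A α := by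
  let σ : ℕ → List A := fun x => factor w α ℓ (α.idxOf x + 1)
  have hσ : ∀ j (hj : j < α.length), factor w α ℓ (j + 1) = σ α[j] := fun j hj => by
    have hidx : α.idxOf α[j] < α.length := List.idxOf_lt_length_of_mem (α.getElem_mem hj)
    refine factor_eq_of_patAt_eq hC hfactor (x := α[j]) ?_ ?_ <;> rw [mem_varpos]
    · exact ⟨⟨Nat.succ_pos _, hj⟩, patAt_succ hj⟩
    · exact ⟨⟨Nat.succ_pos _, hidx⟩, by rw [patAt_succ hidx, List.getElem_idxOf]⟩
  have hprefix : ∀ j ≤ α.length, w.take (offset α ℓ j) = ((α.take j).map σ).flatten := by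
    intro j hj
    induction j with
    | zero => simp [offset]
    | succ j ih =>
      rw [take_offset_succ hj, ih (Nat.le_of_succ_le hj), hσ j hj,
        List.take_succ_eq_append_getElem hj, List.map_append, List.flatten_append]
      simp
  refine ⟨σ, ?_⟩
  simpa [List.take_of_length_le hlen] using hprefix α.length le_rfl

theorem eq_length_of_mem_varpos (hC : IsCompleteMatchingOrder α C)
    (hlast : ∀ p ∈ C, p.2 ≠ α.length) {x : ℕ} (hend : α.length ∈ varpos α x) (hj : j ∈ varpos α x) :
    j = α.length := by
  rcases (reflTransGen_linked hC hend hj).cases_head with h | ⟨v, hlink | hlink, -⟩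
  · exact h.symm
  · obtain ⟨_, -, hv, hlt⟩ := exists_varpos_of_mem hC hlink
    exact absurd (mem_varpos.1 hv).1.2 (not_le.2 hlt)
  · exact absurd rfl (hlast _ hlink)

theorem getElem_notMem_take_of_last_unmatched {n : ℕ} (hn : α.length = n + 1)
    (hC : IsCompleteMatchingOrder α C) (hlast : ∀ p ∈ C, p.2 ≠ α.length) : α[n] ∉ α.take n := by
  intro hmem
  obtain ⟨i, hi, hin⟩ := List.getElem_of_mem hmem
  rw [List.length_take] at hi
  rw [List.getElem_take] at hin
  have hend : α.length ∈ varpos α α[n] :=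
    mem_varpos.2 ⟨⟨by omega, le_rfl⟩, (congrArg (patAt α) hn).trans (patAt_succ (by omega))⟩
  have hi' : i + 1 ∈ varpos α α[n] :=
    mem_varpos.2 ⟨⟨by omega, by omega⟩, by rw [patAt_succ (by omega), hin]⟩
  have := eq_length_of_mem_varpos hC hlast hend hi'
  omega

/-- The last variable occurs only once, so that its image can absorb the rest of `w`. -/
theorem mem_patternLang_of_last_unmatched (hα : α ≠ []) (hC : IsCompleteMatchingOrder α C)
    (hfactor : ∀ p ∈ C, factor w α ℓ p.1 = factor w α ℓ p.2)
    (hlast : ∀ p ∈ C, p.2 ≠ α.length) : w ∈ PatternLang A α := by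
  obtain ⟨n, hn⟩ := Nat.exists_eq_add_one.2 (List.length_pos_iff.2 hα)
  have hnα : n < α.length := by omega
  have hunique := getElem_notMem_take_of_last_unmatched hn hC hlast
  let ℓ' : ℕ → ℕ := Function.update ℓ α[n] w.length
  have hfactor' : ∀ j, 1 ≤ j → j ≤ n → factor w α ℓ' j = factor w α ℓ j := by
    intro j hj hjn
    obtain ⟨i, rfl⟩ := Nat.exists_eq_add_of_le' hj
    refine factor_congr (by omega) fun y hy => Function.update_of_ne ?_ _ _
    exact ne_of_mem_of_not_mem (List.take_subset_take_left _ hjn hy) hunique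
  refine mem_patternLang_of_factor_eq (ℓ := ℓ') hC (fun p hp => ?_) ?_
  · obtain ⟨x, hp₁, hp₂, hlt⟩ := exists_varpos_of_mem hC hp
    have hpos := (mem_varpos.1 hp₁).1.1
    have hp₂n : p.2 ≤ n := by
      have := (mem_varpos.1 hp₂).1.2
      have := hlast p hp
      omega
    rw [hfactor' p.1 hpos (by omega), hfactor' p.2 (by omega) hp₂n, hfactor p hp]
  · have hupdate : ℓ' (patAt α (n + 1)) = w.length := by
      rw [patAt_succ hnα]
      exact Function.update_self ..
    rw [hn, offset_succ hnα, hupdate]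
    exact Nat.le_add_left _ _

theorem mem_patternLang_of_matches (hα : α ≠ []) (hC : IsCompleteMatchingOrder α C)
    (hK : ∀ p ∈ C, Matches w α ℓ p) : w ∈ PatternLang A α := by
  have hfactor : ∀ p ∈ C, factor w α ℓ p.1 = factor w α ℓ p.2 := fun p hp => (hK p hp).1
  by_cases! hlast : ∃ p ∈ C, p.2 = α.length
  · obtain ⟨p, hp, hend⟩ := hlast
    exact mem_patternLang_of_factor_eq hC hfactor ((hK p hp).2 hend).le
  · exact mem_patternLang_of_last_unmatched hα hC hfactor hlast

theorem offset_eq_length_flatten {σ : ℕ → List A} (hℓ : ∀ x ∈ α, ℓ x = (σ x).length) (j : ℕ) :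
    offset α ℓ j = ((α.take j).map σ).flatten.length := by
  rw [offset, List.length_flatten, List.map_map]
  exact congrArg List.sum (List.map_congr_left fun x hx => hℓ x (List.mem_of_mem_take hx))

theorem factor_flatten_map {σ : ℕ → List A} (hℓ : ∀ x ∈ α, ℓ x = (σ x).length)
    (hj : j < α.length) : factor (α.map σ).flatten α ℓ (j + 1) = σ α[j] := by
  have hsplit : (α.map σ).flatten =
      ((α.take j).map σ).flatten ++ (σ α[j] ++ ((α.drop (j + 1)).map σ).flatten) := by
    conv_lhs => rw [← List.take_append_drop j α, List.drop_eq_getElem_cons hj]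
    simp only [List.map_append, List.map_cons, List.flatten_append, List.flatten_cons]
  rw [factor, Nat.add_sub_cancel, patAt_succ hj, hℓ _ (α.getElem_mem hj),
    offset_eq_length_flatten hℓ, hsplit, List.drop_left, List.take_left]

theorem exists_lengths_forall_matches (hC : IsCompleteMatchingOrder α C)
    (hw : w ∈ PatternLang A α) :
    ∃ ℓ : ℕ → ℕ, (∀ x, ℓ x ≤ w.length) ∧ w.length = offset α ℓ α.length ∧
      ∀ p ∈ C, Matches w α ℓ p := by
  obtain ⟨σ, rfl⟩ := hw
  let ℓ : ℕ → ℕ := fun x => min (σ x).length (α.map σ).flatten.length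
  have hℓ : ∀ x ∈ α, ℓ x = (σ x).length := fun x hx =>
    min_eq_left (List.sublist_flatten_of_mem (List.mem_map_of_mem hx)).length_le
  have htotal : (α.map σ).flatten.length = offset α ℓ α.length := by
    rw [offset_eq_length_flatten hℓ, List.take_length]
  have hfactor : ∀ x, ∀ j ∈ varpos α x, factor (α.map σ).flatten α ℓ j = σ x := by
    intro x j hmem
    obtain ⟨⟨hpos, hj⟩, rfl⟩ := mem_varpos.1 hmem
    obtain ⟨i, rfl⟩ := Nat.exists_eq_add_of_le' hpos
    rw [factor_flatten_map hℓ hj, patAt_succ hj]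
  refine ⟨ℓ, fun x => min_le_right _ _, htotal, fun p hp => ⟨?_, fun _ => htotal⟩⟩
  obtain ⟨x, hp₁, hp₂, -⟩ := exists_varpos_of_mem hC hp
  rw [hfactor x _ hp₁, hfactor x _ hp₂]

end Languages

end Janus

theorem statement12_general {A : Type} (α : List ℕ) (hα : α ≠ [])
    (Δ : List (List (ℕ × Marker))) (hΔ : IsJanusOperatingMode α Δ) :
    ∃ M : JFA (cnOf α Δ + 1) A, M.Lang = PatternLang A α := by
  obtain ⟨C, hC, B, hB, g, hreal⟩ := Janus.exists_blocks_of_isJanusOperatingMode (A := A) hΔ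
  have hpending : ∀ pre x post, B.map Prod.fst = pre ++ x :: post → x ∉ pre →
      (pre.toFinset ∩ post.toFinset).card ≤ cnOf α Δ := by
    intro pre x post hsplit hx
    rw [cnOf, ← hB, hsplit]
    exact (Janus.card_inter_le_sVal pre post hx).trans (Finset.le_sup (f := sVal _) (by simp))
  obtain ⟨M, hM⟩ := Janus.exists_automaton_accepts_iff B hpending
  refine ⟨M, Set.ext fun w => (hM w).trans ⟨?_, fun hw => ?_⟩⟩
  · rintro ⟨ℓ, -, h', hrun⟩
    have hfits : Janus.Fits w α ℓ (0, 0) := by simp [Janus.Fits, Janus.offset]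
    exact Janus.mem_patternLang_of_matches hα hC ((hreal w ℓ).sound hfits h' hrun).2.2
  · obtain ⟨ℓ, hbound, htotal, hmatch⟩ := Janus.exists_lengths_forall_matches hC hw
    exact ⟨ℓ, hbound, _, (hreal w ℓ).complete htotal hmatch⟩

/-- Theorem 1 of the paper. Let `α` be a terminal-free
pattern and let `Δ` be an arbitrary Janus operating mode for `α`. Then there
exists a Janus automaton `M` with `cn(Δ) + 1` counters such that
`L(M) = L(α)`. -/
theorem statement12 {A : Type} [Fintype A] [Nonempty A]
    (α : List ℕ) (hα : α ≠ [])
    (Δ : List (List (ℕ × Marker))) (hΔ : IsJanusOperatingMode α Δ) :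
    ∃ M : JFA (cnOf α Δ + 1) A, M.Lang = PatternLang A α :=
  statement12_general α hα Δ hΔ
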